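/- arXiv:2605.14009 — 7 statements merged into one kernel-verified Lean document; each statement's English description precedes it below -/
import Mathlib

section
/- Let p be an odd prime, q = p^m, and let k be such that m/gcd(k,m) is odd; set σ = p^k. Let a,b,c ∈ F_q and let F = (F_1,F_2,F_3) : F_q^3 → F_q^3 be defined by F_1(x,y,z) = x^{σ+1} + a·y^σ·z + b·x^σ·y + c·x^σ·z, F_2(x,y,z) = a·y^{σ+1} + z^σ·x + b·z^σ·y + c·x^σ·y, F_3(x,y,z) = z^{σ+1} − x^σ·y. Then the polarization Δ_F(u,v) = F(u+v) − F(u) − F(v) satisfies (Δ_F(u,v) = 0 if and only if u = 0 or v = 0) for all u,v ∈ F_q^3 — i.e., Δ_F is a commutative pre-semifield multiplication on F_q^3 — if and only if the equation x^{σ²+σ+1} + c·x^{σ²+σ} + b·x^{σ²} + a = 0 has no solution x ∈ F_q. -/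
/-!
Write `σ x = x ^ p ^ k`, an automorphism of odd order. In suitable coordinates `F w = T w ⨯₃ w` for
a `σ`-semilinear map `T` of `K³`, so the polarization at `(u, v)` vanishes iff
`T u ⨯₃ v + T v ⨯₃ u = 0`. If such `u`, `v` are linearly independent, pairing with `u` and `v` shows
that `T` preserves the plane they span, hence acts as `t ↦ μ * σ t` on the quotient line. Now
`t ↦ μ * (σ t - t)` and `T - μ` are linear over the fixed field of `σ`, over which `K` has finite
dimension. The former kills `1`, so it is not surjective; hence `T - μ` is not surjective either,
so it is not injective, and `T` has an eigenvector, which is a zero of `F`. If `v = l • u`, then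
`(l + σ l) • (T u ⨯₃ u) = 0`, and `σ l ≠ -l` because `σ` has odd order. Finally, the nontrivial
zeros of `F` are the multiples `y • (σ t * t, 1, σ t)`, `y ≠ 0`, with `t` a root of the projective
polynomial.
-/

open Matrix Module

section OddOrder

theorem smul_eq_self_of_sq_smul_eq_self {M α : Type*} [Monoid M] [MulAction M α] {g : M} {x : α}
    (hg : Odd (orderOf g)) (hx : g ^ 2 • x = x) : g • x = x := by
  obtain ⟨n, hn⟩ := hg
  have hpow : (g ^ 2) ^ (n + 1) = g := by
    rw [← pow_mul, show 2 * (n + 1) = orderOf g + 1 by lia, pow_succ, pow_orderOf_eq_one, one_mul]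
  have hmem : (g ^ 2) ^ (n + 1) ∈ MulAction.stabilizerSubmonoid M x := pow_mem hx (n + 1)
  rwa [hpow] at hmem

theorem eq_zero_of_ringAut_apply_eq_neg {R : Type*} [Ring R] [NoZeroDivisors R] (h2 : (2 : R) ≠ 0)
    {σ : RingAut R} (hσ : Odd (orderOf σ)) {x : R} (hx : σ x = -x) : x = 0 := by
  have hfix : σ x = x := smul_eq_self_of_sq_smul_eq_self hσ (by simp [hx])
  have : 2 * x = 0 := by rw [two_mul, ← eq_neg_iff_add_eq_zero, ← hx, hfix]
  exact (mul_eq_zero.mp this).resolve_left h2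

theorem odd_orderOf_iterateFrobeniusEquiv {p m k : ℕ} {K : Type*} [Field K] [Fintype K]
    [Fact p.Prime] [CharP K p] (hK : Fintype.card K = p ^ m) (hkm : Odd (m / Nat.gcd k m)) :
    Odd (orderOf (iterateFrobeniusEquiv K p k : RingAut K)) := by
  have hfrob : (frobeniusEquiv K p : RingAut K) ^ m = 1 := by
    ext x
    rw [← iterateFrobeniusEquiv_eq_pow, iterateFrobeniusEquiv_def, ← hK, FiniteField.pow_card,
      RingAut.one_apply]
  refine hkm.of_dvd_nat (orderOf_dvd_of_pow_eq_one ?_)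
  rw [iterateFrobeniusEquiv_eq_pow, ← pow_mul, ← Nat.mul_div_assoc _ (Nat.gcd_dvd_right k m),
    Nat.mul_comm, Nat.mul_div_assoc _ (Nat.gcd_dvd_left k m), pow_mul, hfrob, one_pow]

end OddOrder

section SemilinearEigenvector

variable {K V : Type*} [Field K] [AddCommGroup V] [Module K V] [FiniteDimensional K V]
  {σ : RingAut K}

theorem injective_iff_surjective_of_map_fixed_smul (hσ : IsOfFinOrder σ) (f : V →+ V)
    (hf : ∀ (c : K) (v : V), σ c = c → f (c • v) = c • f v) :
    Function.Injective f ↔ Function.Surjective f := by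
  have : Finite (Subgroup.zpowers σ) := hσ.finite_zpowers
  let k := FixedPoints.subfield (Subgroup.zpowers σ) K
  have : FiniteDimensional k V := .trans k K V
  let g : V →ₗ[k] V :=
    { f with map_smul' := fun c v => hf c v (c.2 ⟨σ, Subgroup.mem_zpowers σ⟩) }
  exact g.injective_iff_surjective

theorem exists_apply_eq_smul_of_dual_apply (hσ : IsOfFinOrder σ)
    (T : V →ₛₗ[(σ : K →+* K)] V) {φ : Dual K V} (hφ : φ ≠ 0) {μ : K}
    (hT : ∀ v, φ (T v) = μ * σ (φ v)) : ∃ v ≠ 0, T v = μ • v := by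
  let f : V →+ V := T.toAddMonoidHom - DistribSMul.toAddMonoidHom V μ
  let g : K →+ K := (AddMonoidHom.mulLeft μ).comp ((σ : K →+* K).toAddMonoidHom - .id K)
  have hfφ (v : V) : φ (f v) = g (φ v) := by simp [f, g, hT]
  have hg : ¬ Function.Surjective g := by
    rw [← injective_iff_surjective_of_map_fixed_smul hσ g
      fun c t hc => by simp [g, hc, mul_sub, mul_left_comm]]
    exact fun hinj => one_ne_zero (hinj (by simp [g]) : (1 : K) = 0)
  have hf : ¬ Function.Injective f := by
    rw [injective_iff_surjective_of_map_fixed_smul hσ f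
      fun c v hc => by simp [f, hc, smul_sub, smul_comm μ c]]
    refine fun hsurj => hg fun t => ?_
    obtain ⟨v, rfl⟩ := (LinearMap.surjective hφ).comp hsurj t
    exact ⟨φ v, (hfφ v).symm⟩
  rw [injective_iff_map_eq_zero] at hf
  push Not at hf
  obtain ⟨v, hv, hv0⟩ := hf
  exact ⟨v, hv0, sub_eq_zero.mp hv⟩

theorem exists_eigenvector_of_map_ker_le (hσ : IsOfFinOrder σ)
    (T : V →ₛₗ[(σ : K →+* K)] V) {φ : Dual K V} (hφ : φ ≠ 0)
    (hT : ∀ v ∈ LinearMap.ker φ, T v ∈ LinearMap.ker φ) : ∃ μ : K, ∃ v ≠ 0, T v = μ • v := by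
  obtain ⟨e, he⟩ := LinearMap.surjective hφ 1
  refine ⟨φ (T e), exists_apply_eq_smul_of_dual_apply hσ T hφ fun v => ?_⟩
  have hker : v - φ v • e ∈ LinearMap.ker φ := by simp [he]
  simpa [sub_eq_zero, mul_comm] using hT _ hker

end SemilinearEigenvector

section CrossProduct

theorem cross_dotProduct_eq_zero_of_cross_add_cross_eq_zero {R : Type*} [CommRing R]
    {u v x y : Fin 3 → R} (h : x ⨯₃ v + y ⨯₃ u = 0) : u ⨯₃ v ⬝ᵥ x = 0 := by
  have hu : u ⬝ᵥ (x ⨯₃ v) = 0 := by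
    simpa [dotProduct_add] using congrArg (u ⬝ᵥ ·) h
  rw [dotProduct_comm, triple_product_permutation, ← cross_anticomm, dotProduct_neg, hu, neg_zero]

variable {K : Type*} [Field K] {u v : Fin 3 → K}

theorem ker_dotProduct_cross (h : LinearIndependent K ![u, v]) :
    LinearMap.ker (dotProductEquiv K (Fin 3) (u ⨯₃ v)) = Submodule.span K {u, v} := by
  have hφ : dotProductEquiv K (Fin 3) (u ⨯₃ v) ≠ 0 := by
    simpa using crossProduct_ne_zero_iff_linearIndependent.mpr h
  have hle : Submodule.span K {u, v} ≤ LinearMap.ker (dotProductEquiv K (Fin 3) (u ⨯₃ v)) := by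
    simp [Submodule.span_le, Set.insert_subset_iff, dotProduct_comm (u ⨯₃ v)]
  refine (Submodule.eq_of_le_of_finrank_eq hle ?_).symm
  have hker := Dual.finrank_ker_add_one_of_ne_zero hφ
  have hspan := finrank_span_eq_card h
  rw [range_cons_cons_empty] at hspan
  simp only [finrank_fin_fun, Fintype.card_fin] at hker hspan
  lia

variable {σ : RingAut K} (T : (Fin 3 → K) →ₛₗ[(σ : K →+* K)] (Fin 3 → K))

theorem exists_eigenvector_of_cross_add_cross_eq_zero (hσ : IsOfFinOrder σ)
    (huv : LinearIndependent K ![u, v]) (h : T u ⨯₃ v + T v ⨯₃ u = 0) :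
    ∃ μ : K, ∃ w ≠ 0, T w = μ • w := by
  have hφ : dotProductEquiv K (Fin 3) (u ⨯₃ v) ≠ 0 := by
    simpa using crossProduct_ne_zero_iff_linearIndependent.mpr huv
  refine exists_eigenvector_of_map_ker_le hσ T hφ ?_
  have hu : u ⨯₃ v ⬝ᵥ T u = 0 := cross_dotProduct_eq_zero_of_cross_add_cross_eq_zero h
  have hv : u ⨯₃ v ⬝ᵥ T v = 0 := by
    rw [add_comm] at h
    rw [← cross_anticomm, neg_dotProduct, cross_dotProduct_eq_zero_of_cross_add_cross_eq_zero h,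
      neg_zero]
  intro w hw
  rw [ker_dotProduct_cross huv, Submodule.mem_span_pair] at hw
  obtain ⟨s, t, rfl⟩ := hw
  simp [hu, hv]

theorem cross_add_cross_eq_zero_iff (h2 : (2 : K) ≠ 0) (hσ : Odd (orderOf σ))
    (hT : ∀ w, T w ⨯₃ w = 0 → w = 0) :
    T u ⨯₃ v + T v ⨯₃ u = 0 ↔ u = 0 ∨ v = 0 := by
  refine ⟨fun h => ?_, by rintro (rfl | rfl) <;> simp⟩
  have hfin : IsOfFinOrder σ := orderOf_pos_iff.mp hσ.pos
  by_contra! ⟨hu, hv⟩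
  by_cases huv : LinearIndependent K ![u, v]
  · obtain ⟨μ, w, hw0, hw⟩ := exists_eigenvector_of_cross_add_cross_eq_zero T hfin huv h
    exact hw0 (hT w (by simp [hw]))
  · rw [LinearIndependent.pair_iff' hu] at huv
    push Not at huv
    obtain ⟨l, rfl⟩ := huv
    have hl : (l + σ l) • (T u ⨯₃ u) = 0 := by simpa [add_smul] using h
    rcases smul_eq_zero.mp hl with hl | hTu
    · have := eq_zero_of_ringAut_apply_eq_neg h2 hσ (eq_neg_of_add_eq_zero_right hl)
      simp [this] at hv
    · exact hu (hT u hTu)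

theorem forall_cross_add_cross_eq_zero_iff (h2 : (2 : K) ≠ 0) (hσ : Odd (orderOf σ)) :
    (∀ u v, T u ⨯₃ v + T v ⨯₃ u = 0 ↔ u = 0 ∨ v = 0) ↔ ∀ w, T w ⨯₃ w = 0 → w = 0 := by
  refine ⟨fun h w hw => ?_, fun h u v => cross_add_cross_eq_zero_iff T h2 hσ h⟩
  simpa using (h w w).mp (by simp [hw])

end CrossProduct

section CrossFactorization

variable {R : Type*} [CommRing R] (σ : RingAut R) (a b c : R)

/-- The map `F` of the theorem, with an automorphism `σ` of `R` in place of the Frobenius power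
`x ↦ x ^ p ^ k`. -/
def semiquadraticMap (w : R × R × R) : R × R × R :=
  (σ w.1 * w.1 + a * σ w.2.1 * w.2.2 + b * σ w.1 * w.2.1 + c * σ w.1 * w.2.2,
    a * (σ w.2.1 * w.2.1) + σ w.2.2 * w.1 + b * σ w.2.2 * w.2.1 + c * σ w.1 * w.2.1,
    σ w.2.2 * w.2.2 - σ w.1 * w.2.1)

/-- The value at `x` of the projective polynomial of the theorem, with an automorphism `σ` of `R` in
place of the Frobenius power `x ↦ x ^ p ^ k`. -/
def projectivePolynomial (x : R) : R :=
  σ (σ x) * σ x * x + c * (σ (σ x) * σ x) + b * σ (σ x) + a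

variable (R) in
/-- The identification of triples with vectors indexed by `Fin 3`, on which the cross product is
defined. -/
@[simps apply]
def tripleEquivFun : (R × R × R) ≃ₗ[R] (Fin 3 → R) where
  toFun w := ![w.1, w.2.1, w.2.2]
  invFun w := (w 0, w 1, w 2)
  map_add' u v := by simp
  map_smul' l w := by simp
  left_inv w := rfl
  right_inv w := by ext i; fin_cases i <;> rfl

/-- The linear factor `P` in the factorization `F w = S w ⨯₃ P w` of `semiquadraticMap`. -/
@[simps apply]
def linearFactor : (R × R × R) ≃ₗ[R] (Fin 3 → R) where
  toFun w := ![w.2.1, -w.2.2, w.1 + b * w.2.1]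
  invFun w := (w 2 - b * w 0, w 0, -w 1)
  map_add' u v := by ext i; fin_cases i <;> simp <;> ring
  map_smul' l w := by ext i; fin_cases i <;> simp; ring
  left_inv w := by simp
  right_inv w := by ext i; fin_cases i <;> simp

/-- The semilinear factor `S` in the factorization `F w = S w ⨯₃ P w` of `semiquadraticMap`. -/
@[simps apply]
def semilinearFactor : (R × R × R) →ₛₗ[(σ : R →+* R)] (Fin 3 → R) where
  toFun w := ![-σ w.2.2, σ w.1, a * σ w.2.1 + c * σ w.1]
  map_add' u v := by ext i; fin_cases i <;> simp <;> ring
  map_smul' l w := by ext i; fin_cases i <;> simp; ring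

theorem tripleEquivFun_semiquadraticMap (w : R × R × R) :
    tripleEquivFun R (semiquadraticMap σ a b c w) =
      semilinearFactor σ a c w ⨯₃ linearFactor b w := by
  ext i
  fin_cases i <;> simp [semiquadraticMap, cross_apply] <;> ring

theorem semiquadraticMap_eq_zero_iff_cross (w : R × R × R) :
    semiquadraticMap σ a b c w = 0 ↔ semilinearFactor σ a c w ⨯₃ linearFactor b w = 0 := by
  rw [← tripleEquivFun_semiquadraticMap, LinearEquiv.map_eq_zero_iff]

theorem polar_semiquadraticMap_eq_zero_iff_cross (u v : R × R × R) :
    QuadraticMap.polar (semiquadraticMap σ a b c) u v = 0 ↔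
      semilinearFactor σ a c u ⨯₃ linearFactor b v +
        semilinearFactor σ a c v ⨯₃ linearFactor b u = 0 := by
  rw [← (tripleEquivFun R).map_eq_zero_iff, QuadraticMap.polar]
  simp only [map_sub, tripleEquivFun_semiquadraticMap, map_add, LinearMap.add_apply]
  abel_nf

variable {σ a b c} in
theorem semiquadraticMap_eq_zero_of_projectivePolynomial_eq_zero {t : R}
    (ht : projectivePolynomial σ a b c t = 0) :
    semiquadraticMap σ a b c (σ t * t, 1, σ t) = 0 := by
  rw [projectivePolynomial] at ht
  simp only [semiquadraticMap, Prod.mk_eq_zero, map_mul, map_one]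
  refine ⟨?_, ?_, ?_⟩
  · linear_combination σ t * ht
  · linear_combination ht
  · ring

end CrossFactorization

section Zeros

variable {K : Type*} [Field K] {σ : RingAut K} {a b c : K}

theorem exists_projectivePolynomial_eq_zero {w : K × K × K} (hw : w ≠ 0)
    (h : semiquadraticMap σ a b c w = 0) :
    ∃ t, projectivePolynomial σ a b c t = 0 := by
  obtain ⟨x, y, z⟩ := w
  simp only [semiquadraticMap, Prod.mk_eq_zero] at h
  obtain ⟨h1, h2, h3⟩ := h
  have hy : y ≠ 0 := by
    rintro rfl
    obtain rfl : z = 0 := by simpa using h3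
    obtain rfl : x = 0 := by simpa using h1
    exact hw rfl
  have hσy : σ y ≠ 0 := by simpa using hy
  obtain ⟨t, ht⟩ := σ.surjective (z / y)
  have hz : z = σ t * y := by rw [ht, div_mul_cancel₀ z hy]
  have hx : x = σ t * t * y := by
    apply σ.injective
    apply mul_right_cancel₀ hy
    simp only [hz, map_mul] at h3 ⊢
    linear_combination -h3
  refine ⟨t, mul_right_cancel₀ (mul_ne_zero hσy hy) ?_⟩
  simp only [hx, hz, map_mul] at h2
  rw [projectivePolynomial]
  linear_combination h2

variable (σ a b c)

theorem forall_semiquadraticMap_eq_zero_iff :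
    (∀ w, semiquadraticMap σ a b c w = 0 → w = 0) ↔
      ¬ ∃ t, projectivePolynomial σ a b c t = 0 := by
  refine ⟨fun h ⟨t, ht⟩ => ?_, fun h w hw => ?_⟩
  · simpa using h _ (semiquadraticMap_eq_zero_of_projectivePolynomial_eq_zero ht)
  · by_contra hw0
    exact h (exists_projectivePolynomial_eq_zero hw0 hw)

theorem stmt0_general (h2 : (2 : K) ≠ 0) (hσ : Odd (orderOf σ)) :
    (∀ u v, QuadraticMap.polar (semiquadraticMap σ a b c) u v = 0 ↔ u = 0 ∨ v = 0) ↔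
      ¬ ∃ x, projectivePolynomial σ a b c x = 0 := by
  let P := linearFactor b
  let T := semilinearFactor σ a c ∘ₛₗ (P.symm : (Fin 3 → K) →ₗ[K] K × K × K)
  have hT := forall_cross_add_cross_eq_zero_iff T h2 hσ
  simp only [P.surjective.forall, T, P, LinearMap.comp_apply, LinearEquiv.coe_coe,
    LinearEquiv.symm_apply_apply, LinearEquiv.map_eq_zero_iff,
    ← polar_semiquadraticMap_eq_zero_iff_cross, ← semiquadraticMap_eq_zero_iff_cross] at hT
  rw [hT, forall_semiquadraticMap_eq_zero_iff]

end Zeros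

theorem projectivePolynomial_iterateFrobeniusEquiv {R : Type*} [CommRing R] (p k : ℕ)
    [ExpChar R p] [PerfectRing R p] (a b c x : R) :
    projectivePolynomial (iterateFrobeniusEquiv R p k) a b c x =
      x ^ (p ^ (2 * k) + p ^ k + 1) + c * x ^ (p ^ (2 * k) + p ^ k) +
        b * x ^ (p ^ (2 * k)) + a := by
  have hsq : (x ^ p ^ k) ^ p ^ k = x ^ p ^ (2 * k) := by rw [← pow_mul, ← pow_add, two_mul]
  simp only [projectivePolynomial, iterateFrobeniusEquiv_def, hsq, pow_add, pow_one]

/-- The polarization of the semiquadratic map `F` on `F_q^3` is a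
commutative pre-semifield multiplication iff the projective polynomial
`x^{σ²+σ+1} + c x^{σ²+σ} + b x^{σ²} + a` has no root in `F_q`. -/
theorem stmt0 {p m k : ℕ} (hp : p.Prime) (hpodd : Odd p) (hm : 0 < m)
    (hkm : Odd (m / Nat.gcd k m))
    {K : Type*} [Field K] [Fintype K] (hK : Fintype.card K = p ^ m)
    (a b c : K) (Fm : K × K × K → K × K × K)
    (hF : Fm = fun w =>
      (w.1 ^ (p ^ k + 1) + a * w.2.1 ^ p ^ k * w.2.2 + b * w.1 ^ p ^ k * w.2.1
          + c * w.1 ^ p ^ k * w.2.2,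
       a * w.2.1 ^ (p ^ k + 1) + w.2.2 ^ p ^ k * w.1 + b * w.2.2 ^ p ^ k * w.2.1
          + c * w.1 ^ p ^ k * w.2.1,
       w.2.2 ^ (p ^ k + 1) - w.1 ^ p ^ k * w.2.1)) :
    (∀ u v : K × K × K, Fm (u + v) - Fm u - Fm v = 0 ↔ u = 0 ∨ v = 0) ↔
      ¬ ∃ x : K, x ^ (p ^ (2 * k) + p ^ k + 1) + c * x ^ (p ^ (2 * k) + p ^ k)
          + b * x ^ (p ^ (2 * k)) + a = 0 := by
  have := Fact.mk hp
  have : CharP K p := charP_of_card_eq_prime_pow hK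
  have h2 : (2 : K) ≠ 0 :=
    Ring.two_ne_zero (ringChar.eq K p ▸ hpodd.ne_two_of_dvd_nat dvd_rfl)
  have hFm : Fm = semiquadraticMap (iterateFrobeniusEquiv K p k) a b c := by
    simp only [hF, pow_succ]
    rfl
  simp only [hFm, ← projectivePolynomial_iterateFrobeniusEquiv]
  exact stmt0_general _ a b c h2 (odd_orderOf_iterateFrobeniusEquiv hK hkm)
end

section
/- Let q = p^m be odd and let F : F_q^n → F_q^n be a σ-semiquadratic homogeneous map (F ∈ SQH(n,q)) with companion automorphism σ = p^k. Then the polarization Δ_F(u,v) = F(u+v) − F(u) − F(v) satisfies (Δ_F(u,v) = 0 if and only if u = 0 or v = 0) for all u,v ∈ F_q^n — i.e., Δ_F is a commutative pre-semifield multiplication — if and only if both: (a) F(x) = 0 ⟺ x = 0, and (b) F is 2-to-1 on F_q^n∖{0}. -/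
/-!
A semiquadratic homogeneous map `F` with odd exponent `σ` is even and has a biadditive
polarization `Δ`, so it is a quadratic map over `ℤ`. For such a map
`Δ (x + y) (x - y) = 2 (F x - F y)` and `2 Δ u v = F (u + v) - F (u - v)`. Where doubling is
injective, these two identities translate the absence of zero divisors for `Δ` into
`F x = F y → x = ± y`, and back; the latter says that `F` vanishes only at `0` and that its other
fibres are the two-element sets `{x, -x}`.
-/

/-- A map `F : F_q^n → F_q^n` is σ-semiquadratic homogeneous (`F ∈ SQH(n,q)` with
σ = p^k encoded as the natural number exponent `σ`): each coordinate is
`(σ+1)`-homogeneous and polarizes via a σ-sesquilinear form. -/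
def IsSQH {K : Type*} [Field K] {n : ℕ} (σ : ℕ)
    (F : (Fin n → K) → (Fin n → K)) : Prop :=
  ∀ i : Fin n,
    (∀ (c : K) (x : Fin n → K), F (c • x) i = c ^ (σ + 1) * F x i) ∧
    ∃ b : (Fin n → K) → (Fin n → K) → K,
      (∀ x x' y, b (x + x') y = b x y + b x' y) ∧
      (∀ x y y', b x (y + y') = b x y + b x y') ∧
      (∀ (c : K) (x y), b (c • x) y = c * b x y) ∧
      (∀ (c : K) (x y), b x (c • y) = c ^ σ * b x y) ∧
      (∀ x y, F (x + y) i - F x i - F y i = b x y + b y x)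

open QuadraticMap

theorem isSMulRegular_two_of_odd_card {G : Type*} [AddGroup G] (hG : Odd (Nat.card G)) :
    IsSMulRegular G (2 : ℕ) :=
  (Nat.Coprime.nsmul_right_bijective hG.coprime_two_right).injective

/-- A map is injective up to sign if its fibres are contained in sets of the form `{x, -x}`.
It is the condition on a quadratic map through which zero divisors of the polarization and sizes of
fibres are compared. -/
def InjectiveUpToSign {M N : Type*} [Neg M] (f : M → N) : Prop :=
  ∀ ⦃x y⦄, f x = f y → x = y ∨ x = -y

theorem ncard_fiber_eq_two_iff_of_even {M N : Type*} [SubtractionMonoid M] {f : M → N}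
    (hf : f.Even) {x : M} (hx : x ≠ -x) :
    {y : M | y ≠ 0 ∧ f y = f x}.ncard = 2 ↔ ∀ y ≠ 0, f y = f x → y = x ∨ y = -x := by
  have hx0 : x ≠ 0 := fun h => hx (by rw [h, neg_zero])
  have pair_subset : {x, -x} ⊆ {y : M | y ≠ 0 ∧ f y = f x} := by
    rintro y (rfl | rfl)
    exacts [⟨hx0, rfl⟩, ⟨neg_ne_zero.2 hx0, hf x⟩]
  constructor
  · intro hcard y hy hxy
    have fiber_eq : {x, -x} = {y : M | y ≠ 0 ∧ f y = f x} :=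
      Set.eq_of_subset_of_ncard_le pair_subset (by rw [hcard, Set.ncard_pair hx])
        (Set.finite_of_ncard_ne_zero (by rw [hcard]; exact two_ne_zero))
    exact fiber_eq.ge ⟨hy, hxy⟩
  · intro h
    rw [← Set.Subset.antisymm pair_subset fun y hy => h y hy.1 hy.2, Set.ncard_pair hx]

section EvenMap

variable {M N : Type*} [AddCommGroup M] [AddCommGroup N] {f : M → N}

theorem polar_zsmul_left_of_polar_add_left
    (h_add : ∀ x x' y, polar f (x + x') y = polar f x y + polar f x' y) (a : ℤ) (x y : M) :
    polar f (a • x) y = a • polar f x y :=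
  map_zsmul (AddMonoidHom.mk' (polar f · y) fun x x' => h_add x x' y) a x

theorem map_zero_of_polar_add_left
    (h_add : ∀ x x' y, polar f (x + x') y = polar f x y + polar f x' y) : f 0 = 0 := by
  simpa [polar] using h_add 0 0 0

theorem polar_self_of_even (hf : f.Even)
    (h_add : ∀ x x' y, polar f (x + x') y = polar f x y + polar f x' y) (x : M) :
    polar f x x = (2 : ℤ) • f x := by
  have polar_neg_self : polar f (-x) x = -polar f x x := by
    simpa using polar_zsmul_left_of_polar_add_left h_add (-1) x x
  calc polar f x x = -polar f (-x) x := by rw [polar_neg_self, neg_neg]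
    _ = -(0 - f x - f x) := by
      rw [polar, neg_add_cancel, map_zero_of_polar_add_left h_add, hf x]
    _ = (2 : ℤ) • f x := by module

theorem map_zsmul_of_even (hf : f.Even)
    (h_add : ∀ x x' y, polar f (x + x') y = polar f x y + polar f x' y) (a : ℤ) (x : M) :
    f (a • x) = (a * a) • f x := by
  have map_succ_zsmul (b : ℤ) : f ((b + 1) • x) = f (b • x) + (2 * b + 1) • f x := by
    rw [add_smul, one_smul, QuadraticMap.map_add f, polar_zsmul_left_of_polar_add_left h_add,
      polar_self_of_even hf h_add]
    module
  induction a with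
  | zero => simpa using map_zero_of_polar_add_left h_add
  | succ n ih =>
    rw [map_succ_zsmul, ih]
    module
  | pred n ih =>
    have h := map_succ_zsmul (-n - 1)
    rw [sub_add_cancel, ih] at h
    rw [eq_sub_of_add_eq h.symm]
    module

/-- The `ℤ`-quadratic map given by an even map with biadditive polarization. Biadditivity is
recorded in the left argument only, the polarization being symmetric. -/
def quadraticMapOfEven (f : M → N) (hf : f.Even)
    (h_add : ∀ x x' y, polar f (x + x') y = polar f x y + polar f x' y) : QuadraticMap ℤ M N :=
  .ofPolar f (map_zsmul_of_even hf h_add) h_add (polar_zsmul_left_of_polar_add_left h_add)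

end EvenMap

section QuadraticMap

variable {R M N : Type*} [CommRing R] [AddCommGroup M] [AddCommGroup N] [Module R M] [Module R N]
  {Q : QuadraticMap R M N}

theorem polar_add_sub (Q : QuadraticMap R M N) (x y : M) :
    polar Q (x + y) (x - y) = 2 • (Q x - Q y) := by
  rw [polar_add_left, polar_sub_right, polar_sub_right, polar_comm Q y x, polar_self, polar_self]
  module

theorem two_nsmul_polar (Q : QuadraticMap R M N) (x y : M) :
    2 • polar Q x y = Q (x + y) - Q (x - y) := by
  rw [sub_eq_add_neg x y, QuadraticMap.map_add Q x y, QuadraticMap.map_add Q x (-y),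
    polar_neg_right, QuadraticMap.map_neg]
  module

theorem isSMulRegular_two_of_anisotropic (hN : IsSMulRegular N (2 : ℕ)) (hQ : Q.Anisotropic) :
    IsSMulRegular M (2 : ℕ) := by
  refine isSMulRegular_iff_right_eq_zero_of_smul.2 fun x hx => hQ x ?_
  have four_nsmul : 2 • 2 • Q x = 0 := by
    calc 2 • 2 • Q x = Q (x + x) := by
          rw [Q.map_add_self]
          module
      _ = 0 := by rw [← two_nsmul, hx, Q.map_zero]
  exact hN.right_eq_zero_of_smul (hN.right_eq_zero_of_smul four_nsmul)

theorem InjectiveUpToSign.anisotropic (hQ : InjectiveUpToSign Q) : Q.Anisotropic := fun x hx => by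
  simpa using hQ (hx.trans Q.map_zero.symm)

theorem forall_polar_eq_zero_iff_injectiveUpToSign (hN : IsSMulRegular N (2 : ℕ)) :
    (∀ u v, polar Q u v = 0 ↔ u = 0 ∨ v = 0) ↔ InjectiveUpToSign Q := by
  constructor
  · intro h x y hxy
    have hpolar : polar Q (x + y) (x - y) = 0 := by rw [polar_add_sub, hxy, sub_self, smul_zero]
    rcases (h _ _).1 hpolar with hadd | hsub
    · exact Or.inr (eq_neg_of_add_eq_zero_left hadd)
    · exact Or.inl (sub_eq_zero.1 hsub)
  · intro hQ u v
    have hM : IsSMulRegular M (2 : ℕ) := isSMulRegular_two_of_anisotropic hN hQ.anisotropic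
    refine ⟨fun huv => ?_, ?_⟩
    · have hmap : Q (u + v) = Q (u - v) := by
        rw [← sub_eq_zero, ← two_nsmul_polar, huv, smul_zero]
      rcases hQ hmap with h | h
      · exact Or.inr (hM.right_eq_zero_of_smul (by linear_combination (norm := module) h))
      · exact Or.inl (hM.right_eq_zero_of_smul (by linear_combination (norm := module) h))
    · rintro (rfl | rfl)
      exacts [Q.polar_zero_left v, Q.polar_zero_right u]

theorem injectiveUpToSign_iff_anisotropic_and_ncard_fiber (hN : IsSMulRegular N (2 : ℕ)) :
    InjectiveUpToSign Q ↔
      Q.Anisotropic ∧ ∀ x, x ≠ 0 → {y : M | y ≠ 0 ∧ Q y = Q x}.ncard = 2 := by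
  have ncard_fiber (hQ : Q.Anisotropic) {x : M} (hx : x ≠ 0) :
      {y : M | y ≠ 0 ∧ Q y = Q x}.ncard = 2 ↔ ∀ y ≠ 0, Q y = Q x → y = x ∨ y = -x := by
    refine ncard_fiber_eq_two_iff_of_even Q.map_neg fun hneg => hx ?_
    refine (isSMulRegular_two_of_anisotropic hN hQ).right_eq_zero_of_smul ?_
    rw [two_nsmul, ← eq_neg_iff_add_eq_zero, ← hneg]
  constructor
  · intro hQ
    exact ⟨hQ.anisotropic, fun x hx => (ncard_fiber hQ.anisotropic hx).2 fun y _ hy => hQ hy⟩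
  · rintro ⟨hQ, hcard⟩ x y hxy
    by_cases hx : x = 0
    · have hy : y = 0 := hQ y (by rw [← hxy, hx, Q.map_zero])
      exact Or.inl (hx.trans hy.symm)
    · have hy : y ≠ 0 := fun hy => hx (hQ x (by rw [hxy, hy, Q.map_zero]))
      exact (ncard_fiber hQ hy).1 (hcard y hy) x hx hxy

theorem stmt2_general (hN : IsSMulRegular N (2 : ℕ)) :
    (∀ u v, Q (u + v) - Q u - Q v = 0 ↔ u = 0 ∨ v = 0) ↔
      (∀ x, Q x = 0 ↔ x = 0) ∧ ∀ x, x ≠ 0 → {y : M | y ≠ 0 ∧ Q y = Q x}.ncard = 2 := by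
  have anisotropic_iff : Q.Anisotropic ↔ ∀ x, Q x = 0 ↔ x = 0 :=
    ⟨fun hQ _ => hQ.eq_zero_iff, fun hQ x => (hQ x).1⟩
  rw [← anisotropic_iff, ← injectiveUpToSign_iff_anisotropic_and_ncard_fiber hN]
  exact forall_polar_eq_zero_iff_injectiveUpToSign hN

end QuadraticMap

namespace IsSQH

variable {K : Type*} [Field K] {n σ : ℕ} {F : (Fin n → K) → (Fin n → K)}

theorem even (hF : IsSQH σ F) (hσ : Odd σ) : F.Even := fun x => by
  ext i
  simpa [hσ.add_one.neg_one_pow] using (hF i).1 (-1) x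

theorem polar_add_left (hF : IsSQH σ F) (x x' y : Fin n → K) :
    polar F (x + x') y = polar F x y + polar F x' y := by
  ext i
  obtain ⟨-, b, add_left, add_right, -, -, hb⟩ := hF i
  simp only [polar, Pi.add_apply, Pi.sub_apply, hb, add_left, add_right]
  ring

/-- A semiquadratic homogeneous map with odd exponent as a quadratic map. The scalars are `ℤ`
because the polarization is in general not `K`-bilinear. -/
def toQuadraticMap (hF : IsSQH σ F) (hσ : Odd σ) : QuadraticMap ℤ (Fin n → K) (Fin n → K) :=
  quadraticMapOfEven F (hF.even hσ) hF.polar_add_left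

end IsSQH

/-- for odd `q`, the polarization of `F ∈ SQH(n,q)` is a commutative
pre-semifield multiplication iff `F` vanishes only at `0` and `F` is 2-to-1 on
`F_q^n ∖ {0}`. -/
theorem stmt2 {p m k n : ℕ} (hp : p.Prime) (hpodd : Odd p) (hm : 0 < m)
    {K : Type*} [Field K] [Fintype K] (hK : Fintype.card K = p ^ m)
    (F : (Fin n → K) → (Fin n → K)) (hSQH : IsSQH (p ^ k) F) :
    (∀ u v : Fin n → K, F (u + v) - F u - F v = 0 ↔ u = 0 ∨ v = 0) ↔
      ((∀ x, F x = 0 ↔ x = 0) ∧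
        ∀ x : Fin n → K, x ≠ 0 → {y : Fin n → K | y ≠ 0 ∧ F y = F x}.ncard = 2) :=
  stmt2_general (Q := hSQH.toQuadraticMap hpodd.pow) <| isSMulRegular_two_of_odd_card <| by
    simpa [hK] using (hpodd.pow (n := m)).pow (n := n)
end

section
/- Let q = p^m be odd, n odd, and let F : F_q^n → F_q^n be a σ-semiquadratic homogeneous map (F ∈ SQH(n,q)) with companion automorphism σ = p^k such that F(x) = 0 ⟺ x = 0 and F is 2-to-1 on F_q^n∖{0}. Then the induced map on the projective space P^{n−1}(F_q), sending the projective class [x] of nonzero x to [F(x)], is a bijection of P^{n−1}(F_q). -/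
/-!
A projective space over a finite field has finitely many points, so it is enough to deduce from
`F y = l • F x` that `y` is a multiple of `x`.

Injectivity of `F` up to sign leaves only `c = ±1` as solutions of `c * σ c = 1`. Hence `σ` and `σ²`
have the same fixed field `L`, so `σ` has odd order `[K : L]`, and the norm `N` to `L` of any `l` is
`l * (a * σ a)` for some `a`. Thus `F y = l • F x` becomes `F (a • y) = N • F x` with `N ∈ L`, where
`F` is a quadratic map over `L` in odd dimension. If `N` is a square, then `a • y` is a multiple of
`x`. If it is not, the quadratic forms `u ∘ F`, for `u ≠ 0` an `L`-linear functional, are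
nondegenerate, so their character sums change sign when the form is multiplied by `N`; by Fourier
inversion, the fibres of `F` over `w` and `N • w` have two elements in total for every `w`. For
`w = F x` this fails unless `y = 0`, as the second fibre contains `a • y` and `-(a • y)`, and the
first one contains `x`.
-/

section QuadraticSums

variable {L R : Type*} [Field L] [CommRing R]

lemma sum_sq_eq_sum_quadraticChar [Fintype L] [DecidableEq L] (hL : ringChar L ≠ 2) (f : L → R) :
    ∑ x, f (x ^ 2) = ∑ t, ((quadraticChar L t : R) + 1) * f t := by
  have card_sqrts (t : L) :
      ((Finset.univ.filter fun x : L ↦ x ^ 2 = t).card : R) = quadraticChar L t + 1 := by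
    have h := congrArg (Int.cast : ℤ → R) (quadraticChar_card_sqrts hL t)
    simpa using h
  simp only [← Finset.sum_fiberwise' Finset.univ (fun x : L ↦ x ^ 2) f, Finset.sum_const,
    nsmul_eq_mul, card_sqrts]

lemma sum_sq_add_sum_mul_sq [Fintype L] (hL : ringChar L ≠ 2) {l : L} (hl : ¬IsSquare l)
    (f : L → R) :
    ∑ x, f (x ^ 2) + ∑ x, f (l * x ^ 2) = 2 * ∑ t, f t := by
  classical
  have hl₀ : l ≠ 0 := by rintro rfl; exact hl IsSquare.zero
  have twisted : ∑ x, f (l * x ^ 2) = ∑ t, (1 - (quadraticChar L t : R)) * f t := by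
    rw [sum_sq_eq_sum_quadraticChar hL fun t ↦ f (l * t)]
    refine Fintype.sum_equiv (Equiv.mulLeft₀ l hl₀) _ _ fun t ↦ ?_
    have quadraticChar_l : quadraticChar L l = -1 :=
      quadraticChar_neg_one_iff_not_isSquare.mpr hl
    rw [Equiv.mulLeft₀_apply, map_mul, quadraticChar_l, neg_one_mul, Int.cast_neg, sub_neg_eq_add,
      add_comm]
  rw [sum_sq_eq_sum_quadraticChar hL f, twisted, ← Finset.sum_add_distrib, Finset.mul_sum]
  exact Finset.sum_congr rfl fun t _ ↦ by ring

lemma sum_addChar_weightedSumSquares [Fintype L] {ι : Type*} [Fintype ι] [DecidableEq ι]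
    (ψ : AddChar L R) (l : L) (w : ι → Lˣ) :
    ∑ x, ψ (l * QuadraticMap.weightedSumSquares L w x) =
      ∏ i, ∑ t, ψ (l * (w i * t ^ 2)) := by
  rw [Finset.prod_univ_sum, Fintype.piFinset_univ]
  refine Finset.sum_congr rfl fun x _ ↦ ?_
  simp only [QuadraticMap.weightedSumSquares_apply, Units.smul_def, smul_eq_mul, ← pow_two,
    Finset.mul_sum]
  exact map_prod ψ.toMonoidHom (fun i ↦ .ofAdd (l * (w i * x i ^ 2))) Finset.univ

lemma sum_addChar_mul_mul_sq [Fintype L] [IsDomain R] (hL : ringChar L ≠ 2) {l : L}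
    (hl : ¬IsSquare l) {ψ : AddChar L R} (hψ : ψ ≠ 1) {a : L} (ha : a ≠ 0) :
    ∑ x, ψ (l * (a * x ^ 2)) = -∑ x, ψ (a * x ^ 2) := by
  have sum_eq_zero : ∑ t, ψ (a * t) = 0 :=
    (Equiv.sum_comp (Equiv.mulLeft₀ a ha) fun t ↦ ψ t).trans (AddChar.sum_eq_zero_of_ne_one hψ)
  rw [eq_neg_iff_add_eq_zero, add_comm]
  simpa only [sum_eq_zero, mul_zero, mul_left_comm a l] using
    sum_sq_add_sum_mul_sq hL hl fun t ↦ ψ (a * t)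

theorem sum_addChar_mul_quadraticForm [Finite L] [IsDomain R] {V : Type*} [AddCommGroup V]
    [Module L V] [Fintype V] (hL : ringChar L ≠ 2) [Invertible (2 : L)] {l : L} (hl : ¬IsSquare l)
    {ψ : AddChar L R} (hψ : ψ ≠ 1) (hV : Odd (Module.finrank L V)) (Q : QuadraticForm L V)
    (hQ : (QuadraticMap.associated (R := L) Q).SeparatingLeft) :
    ∑ x, ψ (l * Q x) = -∑ x, ψ (Q x) := by
  have := Fintype.ofFinite L
  obtain ⟨w, ⟨e⟩⟩ := QuadraticForm.equivalent_weightedSumSquares_units_of_nondegenerate' Q hQ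
  have diagonalize (a : L) : ∑ x, ψ (a * Q x) = ∏ i, ∑ t, ψ (a * (w i * t ^ 2)) := by
    rw [← sum_addChar_weightedSumSquares]
    exact Fintype.sum_equiv e.toEquiv _ _ fun x ↦ by rw [← e.map_app x]; rfl
  calc ∑ x, ψ (l * Q x)
      = ∏ i, -∑ t, ψ (w i * t ^ 2) := by
        simp only [diagonalize, sum_addChar_mul_mul_sq hL hl hψ (w _).ne_zero]
    _ = -∑ x, ψ (Q x) := by
        simpa [Finset.prod_neg, hV.neg_one_pow] using (diagonalize 1).symm

end QuadraticSums

section FiberCount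

variable {L R W : Type*} [Field L] [CommRing R] [IsDomain R]
  [AddCommGroup W] [Module L W] [Fintype (Module.Dual L W)]

lemma sum_dual_addChar [DecidableEq W] {ψ : AddChar L R} (hψ : ψ ≠ 1) (w : W) :
    ∑ u : Module.Dual L W, ψ (u w) =
      if w = 0 then (Fintype.card (Module.Dual L W) : R) else 0 := by
  split_ifs with hw
  · simp [hw]
  · obtain ⟨t, ht⟩ := AddChar.ne_one_iff.mp hψ
    obtain ⟨u, hu⟩ : ∃ u : Module.Dual L W, u w ≠ 0 := by
      simpa using mt (Module.forall_dual_apply_eq_zero_iff L w).mp hw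
    refine AddChar.sum_eq_zero_of_ne_one
      (ψ := ψ.compAddMonoidHom (LinearMap.applyₗ (R := L) (M₂ := L) w).toAddMonoidHom)
      (AddChar.ne_one_iff.mpr ⟨(t * (u w)⁻¹) • u, ?_⟩)
    simpa [hu] using ht

lemma card_dual_mul_card_fiber {X : Type*} [Fintype X] [DecidableEq W] {ψ : AddChar L R}
    (hψ : ψ ≠ 1) (f : X → W) (w : W) :
    (Fintype.card (Module.Dual L W) : R) * (Finset.univ.filter fun x ↦ f x = w).card =
      ∑ u : Module.Dual L W, (∑ x, ψ (u (f x))) * ψ (-u w) := by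
  simp only [Finset.sum_mul, ← AddChar.map_add_eq_mul, ← sub_eq_add_neg, ← map_sub]
  rw [Finset.sum_comm]
  simp only [sum_dual_addChar hψ, sub_eq_zero]
  simp [← Finset.sum_filter, mul_comm]

end FiberCount

section QuadraticMaps

variable {L V W : Type*} [Field L] [AddCommGroup V] [Module L V] [AddCommGroup W] [Module L W]

theorem card_fiber_add_card_fiber_smul [Finite L] [Fintype V] [DecidableEq W]
    (hL : ringChar L ≠ 2) [Invertible (2 : L)] (hV : Odd (Module.finrank L V))
    (hVW : Module.finrank L V = Module.finrank L W) {Q : QuadraticMap L V W}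
    (hQ : ∀ u : Module.Dual L W, u ≠ 0 →
      (QuadraticMap.associated (R := L) (u.compQuadraticMap Q)).SeparatingLeft)
    {l : L} (hl : ¬IsSquare l) (w : W) :
    (Finset.univ.filter fun x ↦ Q x = w).card + (Finset.univ.filter fun x ↦ Q x = l • w).card =
      2 := by
  have hl₀ : l ≠ 0 := by rintro rfl; exact hl IsSquare.zero
  have := Fintype.ofFinite L
  have : FiniteDimensional L W := Module.finite_of_finrank_pos (hVW ▸ hV.pos)
  have : Finite (Module.Dual L W) := Module.finite_of_finite L
  have := Fintype.ofFinite (Module.Dual L W)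
  obtain ⟨ψ, hψ⟩ : ∃ ψ : AddChar L ℂ, ψ ≠ 1 := by
    obtain ⟨ψ, h⟩ := (AddChar.exists_apply_ne_zero (a := (1 : L))).mpr one_ne_zero
    exact ⟨ψ, AddChar.ne_one_iff.mpr ⟨1, h⟩⟩
  have card_eq : Fintype.card V = Fintype.card (Module.Dual L W) := by
    rw [Module.card_eq_pow_finrank (K := L) (V := V), hVW, ← Subspace.dual_finrank_eq,
      ← Module.card_eq_pow_finrank]
  have card_ne_zero : (Fintype.card (Module.Dual L W) : ℂ) ≠ 0 :=
    Nat.cast_ne_zero.mpr Fintype.card_ne_zero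
  -- Counting the fibre over `w` as that of `l • Q` over `l • w` makes both character sums carry the
  -- same factor `ψ (-u (l • w))`.
  have fiber_eq : (Finset.univ.filter fun x ↦ Q x = w) =
      Finset.univ.filter fun x ↦ l • Q x = l • w := by
    simp only [smul_right_inj hl₀]
  have cancel (u : Module.Dual L W) (hu : u ≠ 0) :
      ∑ x, ψ (u (l • Q x)) + ∑ x, ψ (u (Q x)) = 0 := by
    rw [← eq_neg_iff_add_eq_zero]
    simpa using sum_addChar_mul_quadraticForm hL hl hψ hV (u.compQuadraticMap Q) (hQ u hu)
  have weighted : (Fintype.card (Module.Dual L W) : ℂ) *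
      ((Finset.univ.filter fun x ↦ Q x = w).card +
        (Finset.univ.filter fun x ↦ Q x = l • w).card) =
      Fintype.card (Module.Dual L W) * 2 := by
    rw [mul_add, fiber_eq, card_dual_mul_card_fiber hψ, card_dual_mul_card_fiber hψ,
      ← Finset.sum_add_distrib, Finset.sum_eq_single 0 _ (by simp)]
    · simp [card_eq, mul_two]
    · intro u _ hu
      rw [← add_mul, cancel u hu, zero_mul]
  exact_mod_cast mul_left_cancel₀ card_ne_zero weighted

lemma eq_zero_of_eq_neg (hL : ringChar L ≠ 2) {x : V} (hx : x = -x) : x = 0 := by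
  rw [eq_neg_iff_add_eq_zero, ← two_smul L] at hx
  exact (smul_eq_zero.mp hx).resolve_left (Ring.two_ne_zero hL)

lemma eq_zero_or_eq_zero_of_polar_eq_zero (hL : ringChar L ≠ 2) {Q : QuadraticMap L V W}
    (hQ : ∀ x y, Q x = Q y → x = y ∨ x = -y) {x y : V} (h : QuadraticMap.polar Q x y = 0) :
    x = 0 ∨ y = 0 := by
  have add_eq_sub : Q (x + y) = Q (x - y) := by
    simp [sub_eq_add_neg, QuadraticMap.map_add, QuadraticMap.polar_neg_right, h]
  rcases hQ _ _ add_eq_sub with hxy | hxy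
  · exact .inr (eq_zero_of_eq_neg hL (add_right_injective x (hxy.trans (sub_eq_add_neg x y))))
  · rw [neg_sub, sub_eq_neg_add] at hxy
    exact .inl (eq_zero_of_eq_neg hL (add_right_cancel hxy))

lemma separatingLeft_associated_compQuadraticMap (hL : ringChar L ≠ 2) [Invertible (2 : L)]
    [FiniteDimensional L V] [FiniteDimensional L W]
    (hVW : Module.finrank L V = Module.finrank L W) {Q : QuadraticMap L V W}
    (hQ : ∀ x y, Q x = Q y → x = y ∨ x = -y) {u : Module.Dual L W} (hu : u ≠ 0) :
    (QuadraticMap.associated (R := L) (u.compQuadraticMap Q)).SeparatingLeft := by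
  intro x hx
  by_contra hx₀
  have polar_injective : Function.Injective (Q.polarBilin x) :=
    (injective_iff_map_eq_zero _).mpr fun y hy ↦
      (eq_zero_or_eq_zero_of_polar_eq_zero hL hQ hy).resolve_left hx₀
  have polar_surjective : Function.Surjective (Q.polarBilin x) :=
    (LinearMap.injective_iff_surjective_of_finrank_eq_finrank hVW).mp polar_injective
  refine hu (LinearMap.ext fun w ↦ ?_)
  obtain ⟨y, rfl⟩ := polar_surjective w
  calc u (QuadraticMap.polar Q x y)
      = 2 • QuadraticMap.associated (R := L) (u.compQuadraticMap Q) x y := by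
        rw [← LinearMap.smul_apply, ← LinearMap.smul_apply, QuadraticMap.two_nsmul_associated]
        simp [QuadraticMap.polar]
    _ = 0 := by rw [hx y, smul_zero]

theorem exists_eq_smul_of_quadraticMap_eq_smul [Finite L] (hL : ringChar L ≠ 2)
    (hV : Odd (Module.finrank L V)) (hVW : Module.finrank L V = Module.finrank L W)
    {Q : QuadraticMap L V W} (hQ : ∀ x y, Q x = Q y → x = y ∨ x = -y) {x y : V} {l : L}
    (hxy : Q y = l • Q x) : ∃ c : L, y = c • x := by
  classical
  by_cases hl : IsSquare l
  · obtain ⟨c, rfl⟩ := hl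
    rw [← Q.map_smul] at hxy
    exact (hQ _ _ hxy).elim (fun h ↦ ⟨c, h⟩) fun h ↦ ⟨-c, by rw [h, neg_smul]⟩
  have : FiniteDimensional L V := Module.finite_of_finrank_pos hV.pos
  have : FiniteDimensional L W := Module.finite_of_finrank_pos (hVW ▸ hV.pos)
  by_cases hy : y = -y
  · exact ⟨0, by simp [eq_zero_of_eq_neg hL hy]⟩
  have : Finite V := Module.finite_of_finite L
  have := Fintype.ofFinite V
  have := invertibleOfNonzero (Ring.two_ne_zero hL)
  have count := card_fiber_add_card_fiber_smul hL hV hVW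
    (fun _ hu ↦ separatingLeft_associated_compQuadraticMap hL hVW hQ hu) hl (Q x)
  have y_fiber : 1 < (Finset.univ.filter fun z ↦ Q z = l • Q x).card :=
    Finset.one_lt_card.mpr ⟨y, by simpa, -y, by simpa, hy⟩
  have x_fiber : 0 < (Finset.univ.filter fun z ↦ Q z = Q x).card :=
    Finset.card_pos.mpr ⟨x, by simp⟩
  omega

end QuadraticMaps

section FixedFields

lemma exists_mul_mul_smul_eq_prod {G M : Type*} [Monoid G] [CommMonoid M]
    [MulDistribMulAction G M] (g : G) (a : M) (r : ℕ) :
    ∃ c : M, a * (c * g • c) = ∏ i ∈ Finset.range (2 * r + 1), g ^ i • a := by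
  induction r with
  | zero => exact ⟨1, by simp⟩
  | succ r ih =>
    obtain ⟨c, hc⟩ := ih
    refine ⟨c * g ^ (2 * r + 1) • a, ?_⟩
    change _ = ∏ i ∈ Finset.range (2 * r + 1 + 1 + 1), g ^ i • a
    rw [Finset.prod_range_succ, Finset.prod_range_succ, ← hc, smul_mul', smul_smul, ← pow_succ',
      mul_mul_mul_comm, ← mul_assoc, ← mul_assoc]

lemma smul_prod_range_orderOf {G M : Type*} [Monoid G] [CommMonoid M] [MulDistribMulAction G M]
    (g : G) (a : M) :
    g • ∏ i ∈ Finset.range (orderOf g), g ^ i • a = ∏ i ∈ Finset.range (orderOf g), g ^ i • a := by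
  cases h : orderOf g with
  | zero => simp
  | succ n =>
    rw [Finset.smul_prod']
    simp only [smul_smul, ← pow_succ']
    rw [Finset.prod_range_succ, ← h, pow_orderOf_eq_one, h, Finset.prod_range_succ']
    simp

variable {K : Type*} [Field K] {σ : RingAut K}

lemma apply_eq_self_of_apply_apply_eq_self (hK : ringChar K ≠ 2)
    (hσ : ∀ c, c * σ c = 1 → c = 1 ∨ c = -1) {b : K} (hb : σ (σ b) = b) : σ b = b := by
  have eq_or_eq_neg {a : K} (ha : σ (σ a) = a) : σ a = a ∨ σ a = -a := by
    rcases eq_or_ne a 0 with rfl | ha₀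
    · simp
    · have hσa : σ a ≠ 0 := by simpa
      have norm_one : σ a / a * σ (σ a / a) = 1 := by
        rw [map_div₀, ha]
        field_simp
      simpa [div_eq_iff ha₀] using hσ _ norm_one
  have two_ne_zero : (2 : K) ≠ 0 := Ring.two_ne_zero hK
  rcases eq_or_eq_neg hb with h | h
  · exact h
  rcases eq_or_eq_neg (a := b + 1) (by simp [hb]) with h' | h'
  · rw [map_add, map_one] at h'
    exact add_right_cancel h'
  · rw [map_add, map_one, h] at h'
    exact absurd (by linear_combination h') two_ne_zero

lemma mem_fixedPoints_subfield_zpowers {b : K} :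
    b ∈ FixedPoints.subfield (Subgroup.zpowers σ) K ↔ σ b = b := by
  refine ⟨fun h ↦ h ⟨σ, Subgroup.mem_zpowers σ⟩, fun h ↦ ?_⟩
  have zpowers_le : Subgroup.zpowers σ ≤ MulAction.stabilizer (RingAut K) b :=
    Subgroup.zpowers_le.mpr h
  exact fun τ ↦ zpowers_le τ.2

lemma finrank_fixedPoints_subfield_zpowers (hσ : IsOfFinOrder σ) :
    Module.finrank (FixedPoints.subfield (Subgroup.zpowers σ) K) K = orderOf σ := by
  have : Finite (Subgroup.zpowers σ) := finite_zpowers.mpr hσ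
  have := Fintype.ofFinite (Subgroup.zpowers σ)
  rw [FixedPoints.finrank_eq_card, ← Nat.card_eq_fintype_card, Nat.card_zpowers]

lemma odd_orderOf_of_mul_apply_eq_one (hK : ringChar K ≠ 2) (hfin : IsOfFinOrder σ)
    (hσ : ∀ c, c * σ c = 1 → c = 1 ∨ c = -1) : Odd (orderOf σ) := by
  have fixed_eq : FixedPoints.subfield (Subgroup.zpowers (σ ^ 2)) K =
      FixedPoints.subfield (Subgroup.zpowers σ) K := by
    ext b
    simp only [mem_fixedPoints_subfield_zpowers, pow_two, RingAut.mul_apply]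
    exact ⟨apply_eq_self_of_apply_apply_eq_self hK hσ, fun h ↦ by rw [h, h]⟩
  have orderOf_sq : orderOf (σ ^ 2) = orderOf σ := by
    rw [← finrank_fixedPoints_subfield_zpowers hfin.pow, fixed_eq,
      finrank_fixedPoints_subfield_zpowers hfin]
  rw [hfin.orderOf_pow, Nat.div_eq_self] at orderOf_sq
  exact (Nat.coprime_two_right.mp (orderOf_sq.resolve_left hfin.orderOf_pos.ne'))

end FixedFields

/-- A `σ`-semiquadratic homogeneous map between vector spaces, where `σ` is its companion
automorphism: the coordinate-free form of the class `SQH`, with one vector-valued sesquilinear map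
`B` collecting the sesquilinear forms of all coordinates. -/
structure IsSemiquadratic {K V W : Type*} [Field K] [AddCommGroup V] [Module K V]
    [AddCommGroup W] [Module K W] (σ : RingAut K) (F : V → W) : Prop where
  map_smul (c : K) (x : V) : F (c • x) = (c * σ c) • F x
  exists_sesqForm : ∃ B : V →ₗ[K] V →ₛₗ[(σ : K →+* K)] W,
    ∀ x y, QuadraticMap.polar F x y = B x y + B y x

namespace IsSemiquadratic

variable {K V W : Type*} [Field K] [AddCommGroup V] [Module K V] [AddCommGroup W] [Module K W]
  {σ : RingAut K} {F : V → W}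

lemma map_neg (hF : IsSemiquadratic σ F) (x : V) : F (-x) = F x := by
  simpa using hF.map_smul (-1) x

/-- A semiquadratic map, seen as a quadratic map over a subfield on which its companion automorphism
is trivial. -/
def toQuadraticMap (hF : IsSemiquadratic σ F) (L : Subfield K) (hL : ∀ a ∈ L, σ a = a) :
    QuadraticMap L V W :=
  QuadraticMap.ofPolar F
    (fun a x ↦ by
      have h := hF.map_smul (a : K) x
      rwa [hL a a.2] at h)
    (fun x x' y ↦ by
      obtain ⟨B, hB⟩ := hF.exists_sesqForm
      simp only [hB, _root_.map_add, LinearMap.add_apply]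
      abel)
    (fun a x y ↦ by
      obtain ⟨B, hB⟩ := hF.exists_sesqForm
      simp [hB, Subfield.smul_def, hL a a.2])

lemma eq_or_eq_neg [Finite V] (hF : IsSemiquadratic σ F) (hK : ringChar K ≠ 2)
    (hzero : ∀ x, F x = 0 → x = 0) (h2 : ∀ x, x ≠ 0 → {y | y ≠ 0 ∧ F y = F x}.ncard ≤ 2)
    {x y : V} (hxy : F x = F y) : x = y ∨ x = -y := by
  have map_zero : F 0 = 0 := by simpa using hF.map_smul 0 0
  rcases eq_or_ne y 0 with rfl | hy
  · exact .inl (hzero x (hxy.trans map_zero))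
  have hx : x ≠ 0 := by
    rintro rfl
    exact hy (hzero y (hxy.symm.trans map_zero))
  have pair_subset : {y, -y} ⊆ {z | z ≠ 0 ∧ F z = F y} := by
    rintro z (rfl | rfl)
    · exact ⟨hy, rfl⟩
    · exact ⟨neg_ne_zero.mpr hy, hF.map_neg y⟩
  have pair_eq : {y, -y} = {z | z ≠ 0 ∧ F z = F y} :=
    Set.eq_of_subset_of_ncard_le pair_subset
      ((h2 y hy).trans_eq (Set.ncard_pair (mt (eq_zero_of_eq_neg hK) hy)).symm)
  exact pair_eq.ge ⟨hx, hxy⟩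

lemma eq_one_or_eq_neg_one_of_mul_apply_eq_one [Nontrivial V] (hF : IsSemiquadratic σ F)
    (hinj : ∀ x y, F x = F y → x = y ∨ x = -y) {c : K} (hc : c * σ c = 1) : c = 1 ∨ c = -1 := by
  obtain ⟨x, hx⟩ := exists_ne (0 : V)
  refine (hinj (c • x) x (by rw [hF.map_smul, hc, one_smul])).imp (fun h ↦ ?_) fun h ↦ ?_
  · exact smul_left_injective K hx (by simpa using h)
  · exact smul_left_injective K hx (by simpa using h)

theorem exists_eq_smul_of_eq_smul [Finite K] (hF : IsSemiquadratic σ F) (hK : ringChar K ≠ 2)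
    (hV : Odd (Module.finrank K V)) (hVW : Module.finrank K V = Module.finrank K W)
    (hinj : ∀ x y, F x = F y → x = y ∨ x = -y) {x y : V} {l : K} (hl : l ≠ 0)
    (hxy : F y = l • F x) : ∃ c : K, y = c • x := by
  have : Nontrivial V := Module.nontrivial_of_finrank_pos hV.pos
  have : Finite (RingAut K) := DFunLike.finite _
  have odd_order : Odd (orderOf σ) := odd_orderOf_of_mul_apply_eq_one hK (isOfFinOrder_of_finite σ)
    fun _ ↦ hF.eq_one_or_eq_neg_one_of_mul_apply_eq_one hinj
  let L := FixedPoints.subfield (Subgroup.zpowers σ) K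
  have finrank_L : Module.finrank L K = orderOf σ :=
    finrank_fixedPoints_subfield_zpowers (isOfFinOrder_of_finite σ)
  let Q := hF.toQuadraticMap L fun _ ↦ mem_fixedPoints_subfield_zpowers.mp
  let N := ∏ i ∈ Finset.range (orderOf σ), σ ^ i • l
  obtain ⟨a, ha⟩ : ∃ a : K, l * (a * σ a) = N := by
    obtain ⟨r, hr⟩ := odd_order
    simpa only [N, hr, RingAut.smul_def] using exists_mul_mul_smul_eq_prod σ l r
  have N_mem : N ∈ L := mem_fixedPoints_subfield_zpowers.mpr (smul_prod_range_orderOf σ l)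
  have a_ne_zero : a ≠ 0 := by
    rintro rfl
    have N_ne_zero : N ≠ 0 := Finset.prod_ne_zero_iff.mpr fun i _ ↦
      (smul_ne_zero_iff_ne (σ ^ i)).mpr hl
    exact N_ne_zero (by rw [← ha, zero_mul, mul_zero])
  have Q_smul : Q (a • y) = (⟨N, N_mem⟩ : L) • Q x := by
    change F (a • y) = N • F x
    rw [hF.map_smul, hxy, smul_smul, mul_comm, ha]
  obtain ⟨c, hc⟩ := exists_eq_smul_of_quadraticMap_eq_smul (Algebra.ringChar_eq L K ▸ hK)
    (by rw [← Module.finrank_mul_finrank L K V, finrank_L]; exact odd_order.mul hV)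
    (by rw [← Module.finrank_mul_finrank L K V, ← Module.finrank_mul_finrank L K W, hVW])
    hinj Q_smul
  exact ⟨a⁻¹ * c, by rw [mul_smul, ← Subfield.smul_def, ← hc, inv_smul_smul₀ a_ne_zero]⟩

/-- The map `[x] ↦ [F x]` between projective spaces induced by a semiquadratic map `F` that vanishes
only at `0`. -/
def projectivizationMap (hF : IsSemiquadratic σ F) (hzero : ∀ x, F x = 0 → x = 0) :
    Projectivization K V → Projectivization K W :=
  Projectivization.lift (fun v ↦ Projectivization.mk K (F v) (mt (hzero v) v.2)) <| by
    rintro ⟨_, hx⟩ ⟨y, _⟩ c rfl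
    exact (Projectivization.mk_eq_mk_iff' ..).mpr ⟨c * σ c, (hF.map_smul c y).symm⟩

end IsSemiquadratic

theorem stmt3_general {K V W : Type*} [Field K] [Finite K] (hK : ringChar K ≠ 2)
    [AddCommGroup V] [Module K V] [AddCommGroup W] [Module K W]
    (hV : Odd (Module.finrank K V)) (hVW : Module.finrank K V = Module.finrank K W)
    {σ : RingAut K} {F : V → W} (hF : IsSemiquadratic σ F) (hzero : ∀ x, F x = 0 → x = 0)
    (h2 : ∀ x, x ≠ 0 → {y | y ≠ 0 ∧ F y = F x}.ncard ≤ 2) :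
    Function.Bijective (hF.projectivizationMap hzero) := by
  have : FiniteDimensional K V := Module.finite_of_finrank_pos hV.pos
  have : FiniteDimensional K W := Module.finite_of_finrank_pos (hVW ▸ hV.pos)
  have : Finite V := Module.finite_of_finite K
  have : Finite W := Module.finite_of_finite K
  have : Finite (Projectivization K W) := Quotient.finite _
  have card_eq : Nat.card (Projectivization K V) = Nat.card (Projectivization K W) := by
    rw [Projectivization.card_of_finrank K V rfl, Projectivization.card_of_finrank K W hVW.symm]
  refine (Nat.bijective_iff_injective_and_card _).mpr ⟨fun P P' hP ↦ ?_, card_eq⟩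
  induction P using Projectivization.ind with | h x hx
  induction P' using Projectivization.ind with | h y hy
  obtain ⟨l, hl⟩ := (Projectivization.mk_eq_mk_iff' ..).mp hP
  have l_ne_zero : l ≠ 0 := by
    rintro rfl
    exact hx (hzero x (hl.symm.trans (zero_smul K _)))
  obtain ⟨c, hc⟩ := hF.exists_eq_smul_of_eq_smul hK hV hVW
    (fun _ _ ↦ hF.eq_or_eq_neg hK hzero h2) l_ne_zero hl.symm
  exact (Projectivization.mk_eq_mk_iff' ..).mpr ⟨c, hc.symm⟩

lemma IsSQH.isSemiquadratic {K : Type*} [Field K] {p k n : ℕ} [ExpChar K p] [PerfectRing K p]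
    {F : (Fin n → K) → (Fin n → K)} (hF : IsSQH (p ^ k) F) :
    IsSemiquadratic (iterateFrobeniusEquiv K p k) F := by
  choose map_smul b add_left add_right smul_left smul_right polar_eq using hF
  refine ⟨fun c x ↦ ?_, ?_⟩
  · ext i
    rw [map_smul, iterateFrobeniusEquiv_def, ← pow_succ', Pi.smul_apply, smul_eq_mul]
  · refine ⟨LinearMap.mk₂'ₛₗ (RingHom.id K) _ (fun x y i ↦ b i x y) ?_ ?_ ?_ ?_, ?_⟩
    all_goals intros; ext i
    · exact add_left ..
    · exact smul_left ..
    · exact add_right ..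
    · simp [smul_right, iterateFrobenius_def]
    · exact polar_eq ..

/-- for odd `q` and odd `n`, if `F ∈ SQH(n,q)` vanishes only at `0`
and is 2-to-1 on `F_q^n ∖ {0}`, then the induced map `[x] ↦ [F x]` is a bijection
of `P^{n-1}(F_q)`. -/
theorem stmt3 {p m k n : ℕ} (hp : p.Prime) (hpodd : Odd p) (hm : 0 < m) (hn : Odd n)
    {K : Type*} [Field K] [Fintype K] (hK : Fintype.card K = p ^ m)
    (F : (Fin n → K) → (Fin n → K)) (hSQH : IsSQH (p ^ k) F)
    (hzero : ∀ x, F x = 0 ↔ x = 0)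
    (h2 : ∀ x : Fin n → K, x ≠ 0 → {y : Fin n → K | y ≠ 0 ∧ F y = F x}.ncard = 2) :
    ∃ G : Projectivization K (Fin n → K) → Projectivization K (Fin n → K),
      Function.Bijective G ∧
      ∀ (x : Fin n → K) (hx : x ≠ 0),
        G (Projectivization.mk K x hx) =
          Projectivization.mk K (F x) (fun h => hx ((hzero x).mp h)) := by
  have := Fact.mk hp
  have := charP_of_card_eq_prime_pow hK
  have char_ne_two : ringChar K ≠ 2 := by
    rw [ringChar.eq K p]
    rintro rfl
    exact absurd hpodd (by decide)
  exact ⟨_, stmt3_general char_ne_two (by simpa) rfl hSQH.isSemiquadratic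
    (fun x ↦ (hzero x).mp) fun x hx ↦ (h2 x hx).le, fun _ _ ↦ rfl⟩
end

section
/- Let q = p^m be odd and let F : F_q^n → F_q^n be a σ-semiquadratic homogeneous map (F ∈ SQH(n,q)) with companion automorphism σ = p^k such that F(x) = 0 ⟺ x = 0 and the induced map [x] ↦ [F(x)] on P^{n−1}(F_q) is a bijection. Then F is gcd(p^k+1, q−1)-to-1 on F_q^n∖{0}: every value attained by F on F_q^n∖{0} has exactly gcd(p^k+1, q−1) preimages in F_q^n∖{0}. -/
/-! Let `F` be homogeneous of degree `d` and induce an injection on projective points. If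
`F y = F x`, then `x` and `y` span the same line, so `y = u • x` for a unit `u`, and
`u ^ d • F x = F x` forces `u ^ d = 1`. So the fibre through `x` is the orbit of `x` under the
`d`-th roots of unity, which act freely on nonzero vectors; since `Kˣ` is cyclic of order `q - 1`,
there are `gcd d (q - 1)` of them. For a `σ`-semiquadratic map `d = σ + 1`. -/

/-- `F` is homogeneous of degree `d` over the scalars `R`: the part of being semiquadratic that
determines `F` along a line. -/
def IsHomogeneousOfDegree (R : Type*) {M N : Type*} [Monoid R] [SMul R M] [SMul R N]
    (d : ℕ) (F : M → N) : Prop :=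
  ∀ (c : R) (x : M), F (c • x) = c ^ d • F x

theorem IsSQH.isHomogeneousOfDegree {K : Type*} [Field K] {n σ : ℕ}
    {F : (Fin n → K) → (Fin n → K)} (hF : IsSQH σ F) : IsHomogeneousOfDegree K (σ + 1) F :=
  fun c x => funext fun i => (hF i).1 c x

theorem ncard_orbit_subgroup_units {R M : Type*} [Ring R] [IsCancelMulZero R] [AddCommGroup M]
    [Module R M] [Module.IsTorsionFree R M] (Γ : Subgroup Rˣ) {x : M} (hx : x ≠ 0) :
    (MulAction.orbit Γ x).ncard = Nat.card Γ := by
  have smul_injective : Function.Injective fun u : Γ => u • x := fun u v huv =>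
    Subtype.ext <| Units.ext <| smul_left_injective R hx huv
  rw [← Nat.card_coe_set_eq]
  exact Nat.card_range_of_injective smul_injective

theorem card_rootsOfUnity_eq_gcd (K : Type*) [Field K] [Finite K] (d : ℕ) :
    Nat.card (rootsOfUnity d K) = d.gcd (Nat.card K - 1) := by
  rw [← Nat.card_units, Nat.gcd_comm]
  exact IsCyclic.card_powMonoidHom_ker Kˣ d

namespace IsHomogeneousOfDegree

theorem apply_units_smul_eq_iff {R M N : Type*} [CommRing R] [IsCancelMulZero R] [SMul R M]
    [AddCommGroup N] [Module R N] [Module.IsTorsionFree R N] {d : ℕ} {F : M → N}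
    (hF : IsHomogeneousOfDegree R d F) {x : M} (hFx : F x ≠ 0) {u : Rˣ} :
    F (u • x) = F x ↔ u ∈ rootsOfUnity d R := by
  rw [mem_rootsOfUnity', Units.smul_def, hF, ← smul_left_inj (R := R) hFx, one_smul]

variable {K V W : Type*} [Field K] [AddCommGroup V] [Module K V] [AddCommGroup W] [Module K W]
  {d : ℕ} {F : V → W} {G : Projectivization K V → Projectivization K W}

theorem setOf_apply_eq_eq_orbit_rootsOfUnity (hF : IsHomogeneousOfDegree K d F)
    (hne : ∀ x ≠ 0, F x ≠ 0) (hGinj : Function.Injective G)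
    (hG : ∀ (x : V) (hx : x ≠ 0),
      G (Projectivization.mk K x hx) = Projectivization.mk K (F x) (hne x hx))
    {x : V} (hx : x ≠ 0) :
    {y : V | y ≠ 0 ∧ F y = F x} = MulAction.orbit (rootsOfUnity d K) x := by
  ext y
  constructor
  · rintro ⟨hy, hyx⟩
    have same_point : Projectivization.mk K y hy = Projectivization.mk K x hx :=
      hGinj <| by simp only [hG, hyx]
    obtain ⟨u, rfl⟩ := (Projectivization.mk_eq_mk_iff K y x hy hx).1 same_point
    exact ⟨⟨u, (hF.apply_units_smul_eq_iff (hne x hx)).1 hyx⟩, rfl⟩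
  · rintro ⟨⟨u, hu⟩, rfl⟩
    exact ⟨(smul_ne_zero_iff_ne u).2 hx, (hF.apply_units_smul_eq_iff (hne x hx)).2 hu⟩

end IsHomogeneousOfDegree

theorem stmt5_general {K V W : Type*} [Field K] [Finite K] [AddCommGroup V] [Module K V]
    [AddCommGroup W] [Module K W] {d : ℕ} {F : V → W} (hF : IsHomogeneousOfDegree K d F)
    (hne : ∀ x ≠ 0, F x ≠ 0) {G : Projectivization K V → Projectivization K W}
    (hGinj : Function.Injective G)
    (hG : ∀ (x : V) (hx : x ≠ 0),
      G (Projectivization.mk K x hx) = Projectivization.mk K (F x) (hne x hx))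
    {x : V} (hx : x ≠ 0) :
    {y : V | y ≠ 0 ∧ F y = F x}.ncard = d.gcd (Nat.card K - 1) := by
  rw [hF.setOf_apply_eq_eq_orbit_rootsOfUnity hne hGinj hG hx, ncard_orbit_subgroup_units _ hx,
    card_rootsOfUnity_eq_gcd]

/-- for odd `q`, if `F ∈ SQH(n,q)` vanishes only at `0` and the
induced map `[x] ↦ [F x]` on `P^{n-1}(F_q)` is a bijection, then `F` is
`gcd(p^k+1, q-1)`-to-1 on `F_q^n ∖ {0}`. -/
theorem stmt5 {p m k n : ℕ} (hp : p.Prime) (hpodd : Odd p) (hm : 0 < m)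
    {K : Type*} [Field K] [Fintype K] (hK : Fintype.card K = p ^ m)
    (F : (Fin n → K) → (Fin n → K)) (hSQH : IsSQH (p ^ k) F)
    (hzero : ∀ x, F x = 0 ↔ x = 0)
    (G : Projectivization K (Fin n → K) → Projectivization K (Fin n → K))
    (hGbij : Function.Bijective G)
    (hG : ∀ (x : Fin n → K) (hx : x ≠ 0),
      G (Projectivization.mk K x hx) =
        Projectivization.mk K (F x) (fun h => hx ((hzero x).mp h))) :
    ∀ x : Fin n → K, x ≠ 0 →
      {y : Fin n → K | y ≠ 0 ∧ F y = F x}.ncard = Nat.gcd (p ^ k + 1) (p ^ m - 1) := by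
  rw [← hK, Fintype.card_eq_nat_card]
  exact fun x hx => stmt5_general hSQH.isHomogeneousOfDegree _ hGbij.injective hG hx
end

section
/- Let q = p^m and let S : F_q^n → F_q^n be a σ-semiquadratic homogeneous map (S ∈ SQH(n,q)) with companion automorphism σ = p^k such that S(x) = 0 ⟺ x = 0 and the induced map [x] ↦ [S(x)] on P^{n−1}(F_q) is a bijection. Suppose S is degenerate, i.e., there exist invertible F_q-linear maps L_1, L_2 : F_q^n → F_q^n and indices i, j ∈ {1,…,n} such that the j-th coordinate of T = L_1 ∘ S ∘ L_2 does not depend on the i-th variable (T_j(x + b·e_i) = T_j(x) for all x ∈ F_q^n and all b ∈ F_q, where e_i is the i-th standard basis vector). Then gcd(p^k+1, q−1) = 1; in particular p = 2. -/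
/-!
Write `B x y = S (x + y) - S x - S y` and let `β * σ β = 1` with `β ^ 2 ≠ -1`. If `B u v = 0`,
sesquilinearity gives `S (u + β v) = S (u - σ β v)`, and since the fibres of `S` lie in lines, `v`
is a multiple of `u`. On the line of `u` one has `B u (c u) = (c + σ c) S u`, which is nonzero for
`c = β`. So, over the fixed field of `σ`, the kernel of `B u` is a proper subspace of `K u`, and by
rank-nullity the image of `B u` lies in no `K`-hyperplane, contrary to degeneracy. Hence
`β * σ β = 1` forces `β ^ 2 = -1`; for `β = 1` this says that the characteristic is two, and then
`β ^ 2 = 1` gives `β = 1`.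
-/

open Module QuadraticMap Submodule

/-- `σ`-semiquadratic homogeneous maps between modules, for an arbitrary endomorphism `σ` of the
scalars. Mathlib's `QuadraticMap.polar S x y` is `S (x + y) - S x - S y` for any map `S`. -/
structure IsSemiquadratic_s6 {K V W : Type*} [CommRing K] [AddCommGroup V] [Module K V]
    [AddCommGroup W] [Module K W] (σ : K →+* K) (S : V → W) : Prop where
  map_smul : ∀ (c : K) (x : V), S (c • x) = (c * σ c) • S x
  exists_polar_eq : ∃ b : V →ₗ[K] V →ₛₗ[σ] W, ∀ x y, polar S x y = b x y + b y x

/-- The subfield of elements fixed by `σ`, over which the polar form of a `σ`-semiquadratic map is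
bilinear. -/
abbrev fixedSubfield {K : Type*} [Field K] (σ : K →+* K) : Subfield K :=
  σ.eqLocusField (RingHom.id K)

namespace IsSemiquadratic_s6

section CommRing

variable {K V W : Type*} [CommRing K] [AddCommGroup V] [Module K V] [AddCommGroup W] [Module K W]
  {σ : K →+* K} {S : V → W}

theorem map_zero (hS : IsSemiquadratic_s6 σ S) : S 0 = 0 := by
  simpa using hS.map_smul 0 0

theorem polar_add_right (hS : IsSemiquadratic_s6 σ S) (x y z : V) :
    polar S x (y + z) = polar S x y + polar S x z := by
  obtain ⟨b, hb⟩ := hS.exists_polar_eq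
  simp only [hb, map_add, LinearMap.add_apply]
  abel

theorem polar_smul_right (hS : IsSemiquadratic_s6 σ S) {c : K} (hc : σ c = c) (x y : V) :
    polar S x (c • y) = c • polar S x y := by
  obtain ⟨b, hb⟩ := hS.exists_polar_eq
  simp only [hb, map_smulₛₗ, LinearMap.smul_apply, RingHom.id_apply, hc, smul_add]

theorem polar_smul_self (hS : IsSemiquadratic_s6 σ S) (c : K) (x : V) :
    polar S x (c • x) = (c + σ c) • S x := by
  have hadd : x + c • x = (1 + c) • x := by rw [add_smul, one_smul]
  simp only [polar, hadd, hS.map_smul, map_add, map_one]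
  module

theorem map_add_smul_eq_map_sub_smul (hS : IsSemiquadratic_s6 σ S) {β : K} (hβ : β * σ β = 1)
    {u v : V} (huv : polar S u v = 0) : S (u + β • v) = S (u - σ β • v) := by
  have hσβ : σ β * σ (σ β) = 1 := by rw [← map_mul, hβ, map_one]
  have hσσβ : σ (σ β) = β := by linear_combination β * hσβ - σ (σ β) * hβ
  have hpolar : polar S u (β • v) = polar S u (-σ β • v) := by
    obtain ⟨b, hb⟩ := hS.exists_polar_eq
    rw [hb] at huv
    simp only [hb, map_smulₛₗ, LinearMap.smul_apply, RingHom.id_apply, map_neg, hσσβ]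
    linear_combination (norm := module) (β + σ β) • huv
  have hnorm : S (β • v) = S (-σ β • v) := by
    rw [hS.map_smul, hS.map_smul, map_neg, neg_mul_neg, hβ, hσβ]
  have hsplit (w : V) : S (u + w) = polar S u w + S u + S w := by
    simp only [polar]; abel
  rw [sub_eq_add_neg, ← neg_smul, hsplit, hsplit, hpolar, hnorm]

end CommRing

section Field

variable {K V W : Type*} [Field K] [AddCommGroup V] [Module K V] [AddCommGroup W] [Module K W]
  {σ : K →+* K} {S : V → W}

theorem mem_span_of_polar_eq_zero (hS : IsSemiquadratic_s6 σ S)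
    (hfib : ∀ x y, S x = S y → x ∈ K ∙ y) {β : K} (hβ : β * σ β = 1) (hβ' : β ^ 2 ≠ -1)
    {u v : V} (hu : u ≠ 0) (huv : polar S u v = 0) : v ∈ K ∙ u := by
  obtain ⟨c, hc⟩ := mem_span_singleton.1 <|
    hfib _ _ (hS.map_add_smul_eq_map_sub_smul hβ huv)
  have hrel : (β + c * σ β) • v = (c - 1) • u := by
    linear_combination (norm := module) -hc
  have hne : β + c * σ β ≠ 0 := by
    intro h0
    rw [h0, zero_smul, eq_comm, smul_eq_zero_iff_left hu] at hrel
    exact hβ' (by linear_combination β * h0 - c * hβ - hrel)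
  exact ((K ∙ u).smul_mem_iff hne).1 (hrel ▸ smul_mem _ _ (mem_span_singleton_self u))

theorem polar_smul_self_ne_zero (hS : IsSemiquadratic_s6 σ S)
    (hfib : ∀ x y, S x = S y → x ∈ K ∙ y) {β : K} (hβ : β * σ β = 1) (hβ' : β ^ 2 ≠ -1)
    {u : V} (hu : u ≠ 0) : polar S u (β • u) ≠ 0 := by
  have hSu : S u ≠ 0 := fun h => hu <| by
    simpa using hfib u 0 (h.trans hS.map_zero.symm)
  rw [hS.polar_smul_self]
  exact smul_ne_zero (fun h => hβ' (by linear_combination β * h - hβ)) hSu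

/-- The polar form with first argument fixed, as a linear map over the fixed field of `σ`; it is
not `K`-linear in general. -/
def polarRight (hS : IsSemiquadratic_s6 σ S) (x : V) : V →ₗ[fixedSubfield σ] W where
  toFun := polar S x
  map_add' := hS.polar_add_right x
  map_smul' c := hS.polar_smul_right c.2 x

theorem finrank_ker_polarRight_lt [FiniteDimensional (fixedSubfield σ) K]
    (hS : IsSemiquadratic_s6 σ S) (hfib : ∀ x y, S x = S y → x ∈ K ∙ y)
    {β : K} (hβ : β * σ β = 1) (hβ' : β ^ 2 ≠ -1) {u : V} (hu : u ≠ 0) :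
    finrank (fixedSubfield σ) (hS.polarRight u).ker < finrank (fixedSubfield σ) K := by
  let ι : K →ₗ[fixedSubfield σ] V := (LinearMap.toSpanSingleton K V u).restrictScalars _
  let N := (hS.polarRight u).ker
  have hle : N ≤ ι.range := fun v hv =>
    mem_span_singleton.1 (hS.mem_span_of_polar_eq_zero hfib hβ hβ' hu hv)
  have hne : N.comap ι ≠ ⊤ := fun h =>
    hS.polar_smul_self_ne_zero hfib hβ hβ' hu (h.ge (mem_top (x := β)))
  calc finrank (fixedSubfield σ) N
      = finrank (fixedSubfield σ) ((N.comap ι).map ι) := by rw [map_comap_eq_of_le hle]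
    _ ≤ finrank (fixedSubfield σ) (N.comap ι) := finrank_map_le ι _
    _ < finrank (fixedSubfield σ) K := finrank_lt hne

end Field

end IsSemiquadratic_s6

theorem finrank_le_finrank_ker_of_range_le_ker {F K V W : Type*} [Field F] [Field K] [Algebra F K]
    [FiniteDimensional F K]
    [AddCommGroup V] [Module K V] [Module F V] [IsScalarTower F K V] [Module.Finite K V]
    [AddCommGroup W] [Module K W] [Module F W] [IsScalarTower F K W] [Module.Finite K W]
    (hVW : finrank K W ≤ finrank K V) (T : V →ₗ[F] W) {φ : Dual K W} (hφ : φ ≠ 0)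
    (hT : T.range ≤ φ.ker.restrictScalars F) : finrank F K ≤ finrank F T.ker := by
  have : FiniteDimensional F V := Module.Finite.trans K V
  have : FiniteDimensional F W := Module.Finite.trans K W
  have hnullity : finrank F T.range + finrank F T.ker = finrank F K * finrank K V := by
    rw [T.finrank_range_add_finrank_ker, finrank_mul_finrank]
  have hrange : finrank F T.range ≤ finrank F K * finrank K φ.ker := by
    rw [finrank_mul_finrank]
    exact finrank_mono hT
  have hker : finrank K φ.ker + 1 ≤ finrank K V :=
    (Dual.finrank_ker_add_one_of_ne_zero hφ).trans_le hVW
  have hmul : finrank F K * finrank K φ.ker + finrank F K ≤ finrank F K * finrank K V :=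
    Nat.mul_le_mul_left _ hker
  omega

theorem IsSemiquadratic_s6.sq_eq_neg_one {K V W : Type*} [Field K]
    [AddCommGroup V] [Module K V] [Module.Finite K V]
    [AddCommGroup W] [Module K W] [Module.Finite K W] (hVW : finrank K W ≤ finrank K V)
    {σ : K →+* K} [FiniteDimensional (fixedSubfield σ) K] {S : V → W}
    (hS : IsSemiquadratic_s6 σ S) (hfib : ∀ x y, S x = S y → x ∈ K ∙ y)
    {φ : Dual K W} (hφ : φ ≠ 0) {e : V} (he : e ≠ 0) (hφe : ∀ x, φ (S (x + e)) = φ (S x))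
    {β : K} (hβ : β * σ β = 1) : β ^ 2 = -1 := by
  by_contra hβ'
  have hφS : φ (S e) = 0 := by simpa [hS.map_zero] using hφe 0
  have hrange : (hS.polarRight e).range ≤ φ.ker.restrictScalars (fixedSubfield σ) := by
    rintro _ ⟨x, rfl⟩
    change φ (S (e + x) - S e - S x) = 0
    rw [map_sub, map_sub, add_comm e x, hφe, hφS, sub_zero, sub_self]
  exact (hS.finrank_ker_polarRight_lt hfib hβ hβ' he).not_ge
    (finrank_le_finrank_ker_of_range_le_ker hVW _ hφ hrange)

theorem stmt6_general {K V W : Type*} [Field K]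
    [AddCommGroup V] [Module K V] [Module.Finite K V]
    [AddCommGroup W] [Module K W] [Module.Finite K W] (hVW : finrank K W ≤ finrank K V)
    {σ : K →+* K} [FiniteDimensional (fixedSubfield σ) K] {S : V → W}
    (hS : IsSemiquadratic_s6 σ S) (hfib : ∀ x y, S x = S y → x ∈ K ∙ y)
    {φ : Dual K W} (hφ : φ ≠ 0) {e : V} (he : e ≠ 0) (hφe : ∀ x, φ (S (x + e)) = φ (S x))
    {β : K} (hβ : β * σ β = 1) : β = 1 := by
  have hsq {γ : K} (hγ : γ * σ γ = 1) : γ ^ 2 = -1 := hS.sq_eq_neg_one hVW hfib hφ he hφe hγ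
  have hchar : (1 : K) ^ 2 = -1 := hsq (by rw [map_one, one_mul])
  exact sub_eq_zero.1 <| pow_eq_zero_iff two_ne_zero |>.1 <|
    show (β - 1) ^ 2 = 0 by linear_combination hsq hβ - β * hchar

theorem IsSQH.isSemiquadratic_s6 {K : Type*} [Field K] {p k n : ℕ} [ExpChar K p]
    {S : (Fin n → K) → (Fin n → K)} (hS : IsSQH (p ^ k) S) :
    IsSemiquadratic_s6 (iterateFrobenius K p k) S where
  map_smul c x := by
    ext i
    rw [(hS i).1, iterateFrobenius_def, ← pow_succ', Pi.smul_apply, smul_eq_mul]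
  exists_polar_eq := by
    choose b hadd_left hadd_right hsmul_left hsmul_right hpolar using fun i => (hS i).2
    refine ⟨LinearMap.mk₂'ₛₗ (RingHom.id K) (iterateFrobenius K p k) (fun x y i => b i x y)
      (fun x x' y => ?_) (fun c x y => ?_) (fun x y y' => ?_) (fun c x y => ?_),
      fun x y => ?_⟩ <;> ext i
    exacts [hadd_left i x x' y, hsmul_left i c x y, hadd_right i x y y', hsmul_right i c x y,
      hpolar i x y]

theorem mem_span_of_projectivization_injective {K V W : Type*} [DivisionRing K] [AddCommGroup V]
    [Module K V] [AddCommGroup W] [Module K W] {S : V → W} (hzero : ∀ x, S x = 0 ↔ x = 0)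
    {G : Projectivization K V → Projectivization K W} (hGinj : Function.Injective G)
    (hG : ∀ (x : V) (hx : x ≠ 0), G (Projectivization.mk K x hx) =
      Projectivization.mk K (S x) (fun h => hx ((hzero x).mp h)))
    (x y : V) (hxy : S x = S y) : x ∈ K ∙ y := by
  by_cases hx : x = 0
  · exact hx ▸ zero_mem _
  have hy : y ≠ 0 := fun h => hx <| (hzero x).1 <| hxy.trans <| (hzero y).2 h
  have hmk : Projectivization.mk K x hx = Projectivization.mk K y hy :=
    hGinj (by simp only [hG, hxy])
  exact mem_span_singleton.2 ((Projectivization.mk_eq_mk_iff' K x y hx hy).1 hmk)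

theorem exists_dual_periodic_of_coordinate_periodic {K ι κ V W : Type*} [CommRing K] [Nontrivial K]
    [DecidableEq ι] [AddCommGroup V] [Module K V] [AddCommGroup W] [Module K W] {S : V → W}
    (L₁ : W ≃ₗ[K] (κ → K)) (L₂ : (ι → K) ≃ₗ[K] V) {i : ι} {j : κ}
    (h : ∀ x : ι → K, L₁ (S (L₂ (x + Pi.single i 1))) j = L₁ (S (L₂ x)) j) :
    ∃ φ : Dual K W, φ ≠ 0 ∧ ∃ e : V, e ≠ 0 ∧ ∀ x, φ (S (x + e)) = φ (S x) := by
  classical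
  refine ⟨LinearMap.proj j ∘ₗ L₁.toLinearMap, fun h0 => ?_, L₂ (Pi.single i 1), by simp,
    fun x => by simpa using h (L₂.symm x)⟩
  simpa using LinearMap.congr_fun h0 (L₁.symm (Pi.single j 1))

theorem gcd_card_sub_one_eq_one_of_pow_eq_one {K : Type*} [Field K] [Fintype K] {r : ℕ}
    (h : ∀ β : K, β ^ r = 1 → β = 1) : r.gcd (Fintype.card K - 1) = 1 := by
  have hker : (powMonoidHom r : Kˣ →* Kˣ).ker = ⊥ := (Subgroup.eq_bot_iff_forall _).2 fun u hu =>
    Units.ext (h u (by simpa using congr_arg Units.val hu))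
  classical
  rw [Nat.gcd_comm, ← Fintype.card_units, ← Nat.card_eq_fintype_card,
    ← IsCyclic.card_powMonoidHom_ker, hker, Subgroup.card_bot]

/-- if `S ∈ SQH(n,q)` vanishes only at `0`, induces a bijection of
`P^{n-1}(F_q)`, and is degenerate (some coordinate of `L₁ ∘ S ∘ L₂` is
independent of some variable for invertible `F_q`-linear `L₁, L₂`), then
`gcd(p^k+1, q-1) = 1`; in particular `p = 2`. -/
theorem stmt6 {p m k n : ℕ} (hp : p.Prime) (hm : 0 < m)
    {K : Type*} [Field K] [Fintype K] (hK : Fintype.card K = p ^ m)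
    (S : (Fin n → K) → (Fin n → K)) (hSQH : IsSQH (p ^ k) S)
    (hzero : ∀ x, S x = 0 ↔ x = 0)
    (G : Projectivization K (Fin n → K) → Projectivization K (Fin n → K))
    (hGbij : Function.Bijective G)
    (hG : ∀ (x : Fin n → K) (hx : x ≠ 0),
      G (Projectivization.mk K x hx) =
        Projectivization.mk K (S x) (fun h => hx ((hzero x).mp h)))
    (hdeg : ∃ (L₁ L₂ : (Fin n → K) ≃ₗ[K] (Fin n → K)) (i j : Fin n),
      ∀ (x : Fin n → K) (b : K),
        L₁ (S (L₂ (x + b • (Pi.single i 1 : Fin n → K)))) j = L₁ (S (L₂ x)) j) :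
    Nat.gcd (p ^ k + 1) (p ^ m - 1) = 1 ∧ p = 2 := by
  have : Fact p.Prime := ⟨hp⟩
  have : CharP K p := charP_of_card_eq_prime_pow hK
  obtain ⟨L₁, L₂, i, j, hij⟩ := hdeg
  obtain ⟨φ, hφ, e, he, hφe⟩ := exists_dual_periodic_of_coordinate_periodic L₁ L₂
    fun x => by simpa using hij x 1
  have hnorm (β : K) : β * iterateFrobenius K p k β = 1 → β = 1 :=
    stmt6_general le_rfl hSQH.isSemiquadratic_s6
      (mem_span_of_projectivization_injective hzero hGbij.injective hG) hφ he hφe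
  constructor
  · rw [← hK]
    exact gcd_card_sub_one_eq_one_of_pow_eq_one fun β hβ =>
      hnorm β (by rwa [iterateFrobenius_def, ← pow_succ'])
  · rw [← ringChar.eq K p, ← neg_one_eq_one_iff]
    exact hnorm (-1) (by simp)
end

section
/- Let q = p^m, let k with k ≢ 0 (mod m), σ = p^k, a,b,c ∈ F_q, and let F_1,F_2,F_3 : F_q^3 → F_q be defined by F_1(x,y,z) = x^{σ+1} + a·y^σ·z + b·x^σ·y + c·x^σ·z, F_2(x,y,z) = a·y^{σ+1} + z^σ·x + b·z^σ·y + c·x^σ·y, F_3(x,y,z) = z^{σ+1} − x^σ·y. Then for every i ∈ {0,1,2} there do NOT exist F_q-bases (v_1,v_2,v_3) and (u_1,u_2,u_3) of the field F_{q^3} such that (x·v_1 + y·v_2 + z·v_3)^{σ·q^i + 1} = F_1(x,y,z)·u_1 + F_2(x,y,z)·u_2 + F_3(x,y,z)·u_3 for all x,y,z ∈ F_q. In other words, F = (F_1,F_2,F_3) is not GL(3,q)-equivalent to any of the Dembowski–Ostrom monomials X^{σ+1}, X^{σq+1}, X^{σq²+1} on F_{q^3}. -/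
/-!
At `(x, y, z)` both sides are the diagonal values `B w w` of maps `B` that are `σ`-semilinear in the
first argument and linear in the second: `(w, w') ↦ w ^ (σ q ^ i) * w'` on one side, a map with
coefficients in the span of `u` on the other. When `σ` is not the identity on `K`, such a map is
determined by its diagonal, because an alternating one satisfies
`σ t • B x y = B (t • x) y = -B y (t • x) = t • B x y`. So the coefficients agree: the one of
`y ^ σ * x` is `v 1 ^ (σ q ^ i) * v 0 ≠ 0` for the monomial, but that term is missing from all three
`Fᵢ`.
-/

section Semilinear

variable {R M N : Type*} [CommRing R] [IsDomain R] [AddCommGroup M] [Module R M]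
  [AddCommGroup N] [Module R N] [Module.IsTorsionFree R N] {σ : R →+* R}

theorem eq_zero_of_isAlt (hσ : σ ≠ RingHom.id R) {B : M →ₛₗ[σ] M →ₗ[R] N}
    (hB : B.IsAlt) : B = 0 := by
  obtain ⟨t, ht⟩ : ∃ t, σ t ≠ t := by simpa [RingHom.ext_iff] using hσ
  refine LinearMap.ext₂ fun x y ↦ ?_
  have scalar_passes : σ t • B x y = t • B x y := calc
    σ t • B x y = B (t • x) y := (B.map_smulₛₗ₂ t x y).symm
    _ = -B y (t • x) := (hB.neg y (t • x)).symm
    _ = t • B x y := by rw [map_smul, ← smul_neg, hB.neg]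
  have : (σ t - t) • B x y = 0 := by rw [sub_smul, scalar_passes, sub_self]
  exact (smul_eq_zero.mp this).resolve_left (sub_ne_zero.mpr ht)

theorem eq_of_forall_apply_self_eq (hσ : σ ≠ RingHom.id R) {B B' : M →ₛₗ[σ] M →ₗ[R] N}
    (h : ∀ x, B x x = B' x x) : B = B' :=
  sub_eq_zero.mp <| eq_zero_of_isAlt hσ fun x ↦ by
    rw [LinearMap.sub_apply, LinearMap.sub_apply, h, sub_self]

end Semilinear

section TwistedMonomial

variable {R A : Type*} [CommRing R] [Ring A] [Algebra R A]

/-- The coefficients of `F₁ u₁ + F₂ u₂ + F₃ u₃`: the entry `(i, j)` is the coefficient of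
`wᵢ ^ σ * wⱼ`, where `w = (x, y, z)`. -/
def coeffMatrix (a b c : R) (u : Fin 3 → A) : Matrix (Fin 3) (Fin 3) A :=
  !![u 0, b • u 0 + c • u 1 - u 2, c • u 0;
     0,   a • u 1,                 a • u 0;
     u 1, b • u 1,                 u 2]

theorem sum_smul_coeffMatrix (σ : R →+* R) (a b c : R) (u : Fin 3 → A) (w : Fin 3 → R) :
    ∑ i, ∑ j, σ (w i) • w j • coeffMatrix a b c u i j =
      (σ (w 0) * w 0 + a * σ (w 1) * w 2 + b * σ (w 0) * w 1 + c * σ (w 0) * w 2) • u 0 +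
      (a * (σ (w 1) * w 1) + σ (w 2) * w 0 + b * σ (w 2) * w 1 + c * σ (w 0) * w 1) • u 1 +
      (σ (w 2) * w 2 - σ (w 0) * w 1) • u 2 := by
  simp only [coeffMatrix, Fin.sum_univ_three, Matrix.of_apply, Matrix.cons_val]
  module

variable [IsDomain R] [Module.IsTorsionFree R A] {σ : R →+* R}

theorem map_mul_eq_of_forall_map_sum_mul_sum_eq {ι : Type*} [Fintype ι]
    (hσ : σ ≠ RingHom.id R) (τ : A →ₛₗ[σ] A) {v : ι → A} {C : Matrix ι ι A}
    (h : ∀ w : ι → R,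
      τ (∑ i, w i • v i) * ∑ i, w i • v i = ∑ i, ∑ j, σ (w i) • w j • C i j) (i j : ι) :
    τ (v i) * v j = C i j := by
  classical
  let φ : (ι → R) →ₗ[R] A := Fintype.linearCombination R v
  let B : (ι → R) →ₛₗ[σ] (ι → R) →ₗ[R] A := ((LinearMap.mul R A).comp (τ.comp φ)).compl₂ φ
  have hB : B = C.toLinearMapₛₗ₂' R σ (RingHom.id R) :=
    eq_of_forall_apply_self_eq hσ fun w ↦ by
      rw [Matrix.toLinearMapₛₗ₂'_apply]
      exact h w
  simpa [B, φ, Matrix.toLinearMapₛₗ₂'_single] using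
    LinearMap.congr_fun₂ hB (Pi.single i 1) (Pi.single j 1)

theorem stmt7_general [NoZeroDivisors A] (hσ : σ ≠ RingHom.id R) {τ : A →ₛₗ[σ] A}
    (hτ : Function.Injective τ) (a b c : R) {v : Fin 3 → A} (hv₀ : v 0 ≠ 0) (hv₁ : v 1 ≠ 0)
    (u : Fin 3 → A) :
    ¬ ∀ x y z : R,
      τ (x • v 0 + y • v 1 + z • v 2) * (x • v 0 + y • v 1 + z • v 2) =
        (σ x * x + a * σ y * z + b * σ x * y + c * σ x * z) • u 0 +
        (a * (σ y * y) + σ z * x + b * σ z * y + c * σ x * y) • u 1 +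
        (σ z * z - σ x * y) • u 2 := by
  intro h
  have coeff_eq : τ (v 1) * v 0 = coeffMatrix a b c u 1 0 := by
    refine map_mul_eq_of_forall_map_sum_mul_sum_eq hσ τ (fun w ↦ ?_) 1 0
    rw [sum_smul_coeffMatrix, ← h, Fin.sum_univ_three]
  exact mul_ne_zero ((map_ne_zero_iff τ hτ).mpr hv₁) hv₀ coeff_eq

end TwistedMonomial

theorem iterateFrobenius_eq_id_iff {p m : ℕ} [Fact p.Prime] {K : Type*} [Field K] [CharP K p]
    (hK : Nat.card K = p ^ m) (n : ℕ) : iterateFrobenius K p n = RingHom.id K ↔ m ∣ n := by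
  have : Finite K := Nat.finite_of_card_ne_zero (hK ▸ (pow_pos (Fact.out : p.Prime).pos m).ne')
  let _ : Algebra (ZMod p) K := ZMod.algebra K p
  have finrank_eq : Module.finrank (ZMod p) K = m := by
    refine Nat.pow_right_injective (Fact.out : p.Prime).two_le ?_
    simpa [hK] using (Module.natCard_eq_pow_finrank (K := ZMod p) (V := K)).symm
  rw [← finrank_eq, ← FiniteField.orderOf_frobeniusAlgHom, orderOf_dvd_iff_pow_eq_one]
  simp [RingHom.ext_iff, AlgHom.ext_iff, iterateFrobenius_def, AlgHom.coe_pow,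
    FiniteField.coe_frobeniusAlgHom, pow_iterate]

/-- the map `F = (F₁,F₂,F₃)` on `F_q^3` is not `GL(3,q)`-equivalent
to any of the Dembowski–Ostrom monomials `X^{σq^i+1}` (i = 0,1,2) on `F_{q^3}`:
there are no `F_q`-bases `v`, `u` of `F_{q^3}` realizing the monomial via `F`. -/
theorem stmt7 {p m k : ℕ} (hp : p.Prime) (hm : 0 < m) (hk : ¬ m ∣ k)
    {K L : Type*} [Field K] [Fintype K] (hK : Fintype.card K = p ^ m)
    [Field L] [Algebra K L] (hL : Module.finrank K L = 3)
    (a b c : K) (i : Fin 3) :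
    ¬ ∃ (v u : Fin 3 → L),
      (LinearIndependent K v ∧ Submodule.span K (Set.range v) = ⊤) ∧
      (LinearIndependent K u ∧ Submodule.span K (Set.range u) = ⊤) ∧
      ∀ x y z : K,
        (x • v 0 + y • v 1 + z • v 2) ^ (p ^ k * (p ^ m) ^ (i : ℕ) + 1) =
          (x ^ (p ^ k + 1) + a * y ^ p ^ k * z + b * x ^ p ^ k * y
              + c * x ^ p ^ k * z) • u 0 +
          (a * y ^ (p ^ k + 1) + z ^ p ^ k * x + b * z ^ p ^ k * y
              + c * x ^ p ^ k * y) • u 1 +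
          (z ^ (p ^ k + 1) - x ^ p ^ k * y) • u 2 := by
  rintro ⟨v, u, ⟨hv, -⟩, -, h⟩
  have : Fact p.Prime := ⟨hp⟩
  have : CharP K p := charP_of_card_eq_prime_pow hK
  have : CharP L p := charP_of_injective_algebraMap (algebraMap K L).injective p
  have hσ : iterateFrobenius K p (k + m * i) ≠ RingHom.id K := by
    rwa [Ne, iterateFrobenius_eq_id_iff (Nat.card_eq_fintype_card.trans hK),
      Nat.dvd_add_left (dvd_mul_right m i)]
  have pow_eq (x : K) : x ^ (p ^ m) ^ (i : ℕ) = x := by rw [← hK, FiniteField.pow_card_pow]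
  refine stmt7_general hσ (τ := LinearMap.iterateFrobenius K L p (k + m * i))
    (iterateFrobenius_inj L p _) a b c (hv.ne_zero 0) (hv.ne_zero 1) u fun x y z ↦ ?_
  simpa only [LinearMap.iterateFrobenius_def, iterateFrobenius_def, pow_eq, pow_succ, pow_add,
    pow_mul] using h x y z
end

section
/- Let p be an odd prime, q = p^m with m > 2, let k with k ≢ 0 (mod m) and m/gcd(k,m) odd, σ = p^k, and let a,b,c ∈ F_q be such that x^{σ²+σ+1} + c·x^{σ²+σ} + b·x^{σ²} + a = 0 has no solution x ∈ F_q. Let F = (F_1,F_2,F_3) : F_q^3 → F_q^3 be defined by F_1(x,y,z) = x^{σ+1} + a·y^σ·z + b·x^σ·y + c·x^σ·z, F_2(x,y,z) = a·y^{σ+1} + z^σ·x + b·z^σ·y + c·x^σ·y, F_3(x,y,z) = z^{σ+1} − x^σ·y. Then for every integer j with 0 ≤ j < 3m there do NOT exist F_p-linear bijections L_1 : F_q^3 → F_{q^3} and L_2 : F_{q^3} → F_q^3 such that L_1(F(L_2(X))) = X^{p^j + 1} for all X ∈ F_{q^3}. Equivalently, F is not p-equivalent to any Dembowski–Ostrom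 monomial X^{p^j+1} (the case j = 0 being X²), i.e., the commutative pre-semifield defined by the polarization of F is not isotopic to the finite field F_{q^3} or to any commutative twisted field of Albert. -/
/-!
The map `F` is the diagonal `F w = P (w, w)` of a form `P` that is `τ`-semilinear in its first
argument and linear in its second, where `τ x = x ^ σ`. So the polarization
`u ∘ v = P (u, v) + P (v, u)` satisfies `(l • u) ∘ v + u ∘ (l • v) = (l + τ l) • (u ∘ v)` for
every scalar `l`. Suppose that bijections carry `F` to `X ↦ π X * X` with `π` an automorphism of
the field `L`. Identifying source and target with `L` through them turns `∘` into
`x ⋆ y = π x * y + x * π y`, and the scalar multiplications by `l` and `l + τ l` into additive maps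
with `g x ⋆ y + x ⋆ g y = h (x ⋆ y)`. Since automorphisms are linearly independent, comparing
coefficients shows that `g` is multiplication by an element `ι l` of `L`, provided that `π` has odd
order; if its order were even, `π y = -y` would have a nonzero solution, and `⋆` would be
degenerate. As `l ↦ l + τ l` is onto, scalars act on the target by multiplications `θ l` as well.

Replacing `u` by `l • u` in `u ∘ v` now gives the identity of characters
`θ (τ l) * P (u, v) + θ l * P (v, u) = π (ι l) * (π u * v) + ι l * (u * π v)`. A pair of nonzero
vectors with `P (u, v) = 0` leaves only one character on the left, which forces `π ∘ ι = ι`. For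
`u = v` the right-hand side is then a multiple of the single character `ι`, which forces
`θ ∘ τ = θ`, that is `τ = id`.
-/

section GaloisCoefficients

variable {F L : Type*} [Field F] [Field L] [Algebra F L] [FiniteDimensional F L] [IsGalois F L]

/-- By Dedekind's independence of characters and a dimension count, the automorphisms of a finite
Galois extension `L / F` form an `L`-basis of the `F`-linear endomorphisms of `L`. For finite
fields this is the expansion of additive maps as linearized polynomials. -/
noncomputable def galoisBasis : Module.Basis Gal(L/F) L (L →ₗ[F] L) :=
  basisOfLinearIndependentOfCardEqFinrank
    ((linearIndependent_algHom_toLinearMap F L L).comp _ AlgEquiv.coe_toAlgHom_injective)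
    (by rw [Module.finrank_linearMap_self, ← IsGalois.card_aut_eq_finrank,
      Nat.card_eq_fintype_card])

lemma galoisBasis_apply (s : Gal(L/F)) : galoisBasis s = s.toLinearMap := by
  simp [galoisBasis]

/-- The coefficient of `s` in the expansion of an `F`-linear endomorphism of `L` as an `L`-linear
combination of automorphisms. -/
noncomputable def galoisCoeff (s : Gal(L/F)) : (L →ₗ[F] L) →ₗ[L] L :=
  galoisBasis.coord s

lemma sum_galoisCoeff_mul (g : L →ₗ[F] L) (x : L) : ∑ s, galoisCoeff s g * s x = g x := by
  simpa [galoisCoeff, galoisBasis_apply] using LinearMap.congr_fun (galoisBasis.sum_repr g) x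

lemma galoisCoeff_eq_of_forall {g : L →ₗ[F] L} {c : Gal(L/F) → L}
    (h : ∀ x, g x = ∑ s, c s * s x) (s : Gal(L/F)) : galoisCoeff s g = c s := by
  have hg : g = ∑ s, c s • galoisBasis s := by
    ext x
    simp [galoisBasis_apply, h]
  rw [galoisCoeff, Module.Basis.coord_apply, hg, Module.Basis.repr_sum_self]

lemma galoisCoeff_toLinearMap [DecidableEq Gal(L/F)] (s π : Gal(L/F)) :
    galoisCoeff s π.toLinearMap = if s = π then 1 else 0 :=
  galoisCoeff_eq_of_forall (c := fun s ↦ if s = π then 1 else 0) (by simp) s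

lemma galoisCoeff_toLinearMap_comp (s π : Gal(L/F)) (g : L →ₗ[F] L) :
    galoisCoeff s (π.toLinearMap ∘ₗ g) = π (galoisCoeff (π⁻¹ * s) g) := by
  refine galoisCoeff_eq_of_forall (c := fun s ↦ π (galoisCoeff (π⁻¹ * s) g)) (fun x ↦ ?_) s
  simp [← sum_galoisCoeff_mul g x,
    ← Equiv.sum_comp (Equiv.mulLeft π) fun s ↦ π (galoisCoeff (π⁻¹ * s) g) * s x]

lemma galoisCoeff_comp_toLinearMap (s π : Gal(L/F)) (g : L →ₗ[F] L) :
    galoisCoeff s (g ∘ₗ π.toLinearMap) = galoisCoeff (s * π⁻¹) g := by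
  refine galoisCoeff_eq_of_forall (c := fun s ↦ galoisCoeff (s * π⁻¹) g) (fun x ↦ ?_) s
  simp [← sum_galoisCoeff_mul g,
    ← Equiv.sum_comp (Equiv.mulRight π) fun s ↦ galoisCoeff (s * π⁻¹) g * s x]

lemma galoisCoeff_comp_mulLeft (s : Gal(L/F)) (g : L →ₗ[F] L) (y : L) :
    galoisCoeff s (g ∘ₗ LinearMap.mulLeft F y) = galoisCoeff s g * s y := by
  refine galoisCoeff_eq_of_forall (c := fun s ↦ galoisCoeff s g * s y) (fun x ↦ ?_) s
  simp [← sum_galoisCoeff_mul g, mul_assoc]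

lemma apply_eq_mul_of_galoisCoeff_eq_zero {g : L →ₗ[F] L}
    (h : ∀ s ≠ 1, galoisCoeff s g = 0) (x : L) : g x = galoisCoeff 1 g * x := by
  rw [← sum_galoisCoeff_mul g x, Finset.sum_eq_single 1]
  · simp
  · intro s _ hs
    rw [h s hs, zero_mul]
  · simp

end GaloisCoefficients

lemma eq_one_of_odd_orderOf_of_pow_two_pow_eq_one {G : Type*} [Monoid G] {g : G}
    (hg : Odd (orderOf g)) {n : ℕ} (h : g ^ 2 ^ n = 1) : g = 1 :=
  orderOf_eq_one_iff.mp <|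
    Nat.Coprime.eq_one_of_dvd (hg.coprime_two_right.pow_right n) (orderOf_dvd_of_pow_eq_one h)

section TwistedMul

variable {F L : Type*} [Field F] [Field L] [Algebra F L]

/-- The polarization `π x * y + x * π y` of `X ↦ π X * X`: the multiplication of the commutative
pre-semifield of the field `L` (for `π = 1`) or of Albert's commutative twisted fields. -/
def twistedMul (π : Gal(L/F)) (x y : L) : L := π x * y + x * π y

lemma twistedMul_mul_add_mul_of_scalar (π : Gal(L/F)) (c x y : L) :
    twistedMul π (c * x) y + twistedMul π x (c * y) = (c + π c) * twistedMul π x y := by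
  simp only [twistedMul, map_mul]
  ring

variable [FiniteDimensional F L]

lemma exists_ne_zero_map_eq_neg_of_even_orderOf {π : Gal(L/F)} (hπ : Even (orderOf π)) :
    ∃ y ≠ 0, π y = -y := by
  have hroot : (minpoly F π.toLinearMap).IsRoot (-1) := by
    simp [minpoly_algEquiv_toLinearMap π (isOfFinOrder_of_finite π), hπ.neg_one_pow]
  obtain ⟨y, hy⟩ := (Module.End.hasEigenvalue_of_isRoot hroot).exists_hasEigenvector
  exact ⟨y, hy.2, by simpa using hy.apply_eq_smul⟩

lemma odd_orderOf_of_twistedMul_eq_zero {π : Gal(L/F)} {z : L}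
    (hz : ∀ x, twistedMul π z x = 0 → x = 0) : Odd (orderOf π) := by
  by_contra hπ
  obtain ⟨y, hy, hπy⟩ :=
    exists_ne_zero_map_eq_neg_of_even_orderOf (Nat.not_odd_iff_even.mp hπ)
  have hzy : z * y = 0 := hz _ (by simp only [twistedMul, map_mul, hπy]; ring)
  have hz0 : z = 0 := (mul_eq_zero.mp hzy).resolve_right hy
  exact one_ne_zero (hz 1 (by simp [twistedMul, hz0]))

lemma twistedMul_surjective {π : Gal(L/F)} {z : L} (hz : ∀ x, twistedMul π z x = 0 → x = 0) :
    Function.Surjective (twistedMul π z) := by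
  let f : L →ₗ[F] L := LinearMap.mulLeft F (π z) + LinearMap.mulLeft F z ∘ₗ π.toLinearMap
  have hf : Function.Injective f := (injective_iff_map_eq_zero f).mpr hz
  exact LinearMap.injective_iff_surjective.mp hf

variable [IsGalois F L]

/-- Compare coefficients of `s x * t y`. -/
lemma galoisCoeff_of_twistedMul [DecidableEq Gal(L/F)] {π : Gal(L/F)} {g h : L →ₗ[F] L}
    (hgh : ∀ x y, twistedMul π (g x) y + twistedMul π x (g y) = h (twistedMul π x y))
    (s t : Gal(L/F)) :
    π (galoisCoeff (π⁻¹ * s) g) * (if t = 1 then 1 else 0)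
        + galoisCoeff s g * (if t = π then 1 else 0)
        + (if s = π then 1 else 0) * galoisCoeff t g
        + (if s = 1 then 1 else 0) * π (galoisCoeff (π⁻¹ * t) g) =
      galoisCoeff (s * π⁻¹) h * (if t = s * π⁻¹ then 1 else 0)
        + galoisCoeff s h * (if t = s * π then 1 else 0) := by
  have hx (y : L) : y • (π.toLinearMap ∘ₗ g) + π y • g + g y • π.toLinearMap
      + π (g y) • (1 : Gal(L/F)).toLinearMap =
      (h ∘ₗ LinearMap.mulLeft F y) ∘ₗ π.toLinearMap + h ∘ₗ LinearMap.mulLeft F (π y) := by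
    ext x
    have := hgh x y
    simp only [twistedMul, map_add] at this
    simp [mul_comm y, mul_comm (π y), ← this]
    ring
  have hy : π (galoisCoeff (π⁻¹ * s) g) • (1 : Gal(L/F)).toLinearMap
      + galoisCoeff s g • π.toLinearMap
      + (if s = π then 1 else 0 : L) • g
      + (if s = 1 then 1 else 0 : L) • (π.toLinearMap ∘ₗ g) =
      galoisCoeff (s * π⁻¹) h • (s * π⁻¹).toLinearMap
        + galoisCoeff s h • (s * π).toLinearMap := by
    ext y
    have hsy := congrArg (galoisCoeff s) (hx y)
    simp only [map_add, map_smul, galoisCoeff_toLinearMap, galoisCoeff_toLinearMap_comp,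
      galoisCoeff_comp_toLinearMap, galoisCoeff_comp_mulLeft] at hsy
    simp only [LinearMap.add_apply, LinearMap.smul_apply, LinearMap.comp_apply,
      AlgEquiv.toLinearMap_apply, AlgEquiv.mul_apply, AlgEquiv.one_apply, smul_eq_mul] at hsy ⊢
    linear_combination hsy
  simpa only [map_add, map_smul, galoisCoeff_toLinearMap, galoisCoeff_toLinearMap_comp,
    smul_eq_mul] using congrArg (galoisCoeff t) hy

lemma galoisCoeff_eq_zero_of_twistedMul (h2 : (2 : L) ≠ 0) {π : Gal(L/F)}
    (hπ : Odd (orderOf π)) {g h : L →ₗ[F] L}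
    (hgh : ∀ x y, twistedMul π (g x) y + twistedMul π x (g y) = h (twistedMul π x y))
    {s : Gal(L/F)} (hs : s ≠ 1) : galoisCoeff s g = 0 := by
  classical
  have key := galoisCoeff_of_twistedMul hgh
  have hadd {x : L} (hx : x + x = 0) : x = 0 := by simpa [h2, ← two_mul] using hx
  by_cases hπ1 : π = 1
  · subst hπ1
    exact hadd (by simpa [hs, hs.symm] using key s 1)
  have hπ2 : π * π ≠ 1 := fun h ↦
    hπ1 (eq_one_of_odd_orderOf_of_pow_two_pow_eq_one hπ (n := 1) (by simpa [pow_two] using h))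
  have hπ4 : π * (π * (π * π)) ≠ 1 := fun h ↦
    hπ1 (eq_one_of_odd_orderOf_of_pow_two_pow_eq_one hπ (n := 2)
      (by simpa [pow_succ, mul_assoc] using h))
  by_cases hsπ2 : s = π * π
  swap
  · by_cases hsπ : s = π
    · rw [hsπ]
      exact hadd (by simpa [hπ1] using key π π)
    · simpa [hs, hsπ, hπ1, eq_mul_inv_iff_mul_eq, Ne.symm hsπ2] using key s π
  subst hsπ2
  by_cases hπ3 : π * (π * π) = 1
  · rw [mul_eq_one_iff_eq_inv'.mp hπ3]
    simpa using hadd (x := π (galoisCoeff π⁻¹ g)) (by simpa [hπ1, Ne.symm hπ1] using key 1 1)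
  · simpa [Ne.symm hπ1, hπ2, Ne.symm hπ2, hπ3, Ne.symm hπ4, mul_assoc] using key (π * (π * π)) 1

theorem eq_mul_of_twistedMul (h2 : (2 : L) ≠ 0) {π : Gal(L/F)} (hπ : Odd (orderOf π))
    {g h : L →ₗ[F] L}
    (hgh : ∀ x y, twistedMul π (g x) y + twistedMul π x (g y) = h (twistedMul π x y)) :
    ∃ c, ∀ x, g x = c * x :=
  ⟨galoisCoeff 1 g, apply_eq_mul_of_galoisCoeff_eq_zero fun _ hs ↦
    galoisCoeff_eq_zero_of_twistedMul h2 hπ hgh hs⟩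

end TwistedMul

section Characters

variable {G R : Type*} [Monoid G] [CommRing R] [IsDomain R]

lemma ite_add_ite_eq_of_forall_mul_add_mul_eq [DecidableEq (G →* R)] {s t r i : G →* R}
    {A B C D : R} (h : ∀ x, s x * A + t x * B = r x * C + i x * D) (f : G →* R) :
    (if s = f then A else 0) + (if t = f then B else 0) =
      (if r = f then C else 0) + (if i = f then D else 0) := by
  have hzero := linearIndependent_iff.mp (linearIndependent_monoidHom G R)
    (.single s A + .single t B - .single r C - .single i D) <| funext fun x ↦ by
      simp [mul_comm _ (s x), mul_comm _ (t x), mul_comm _ (r x), mul_comm _ (i x), h x]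
  have hf := DFunLike.congr_fun hzero f
  simp only [Finsupp.sub_apply, Finsupp.add_apply, Finsupp.single_apply,
    Finsupp.zero_apply] at hf
  linear_combination hf

lemma eq_of_forall_add_eq_add_self {s t r : G →* R} (h : ∀ x, s x + t x = r x + r x) :
    s = t := by
  classical
  by_contra hst
  have hs := ite_add_ite_eq_of_forall_mul_add_mul_eq (A := 1) (B := 1) (C := 1) (D := 1)
    (by simpa using h) s
  by_cases hrs : r = s <;> simp [Ne.symm hst, hrs] at hs

lemma eq_of_forall_mul_eq_mul_add_mul {t r i : G →* R} {A B C : R} (hB : B ≠ 0) (hC : C ≠ 0)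
    (h : ∀ x, t x * A = r x * B + i x * C) : r = i := by
  classical
  by_contra hri
  have hf := ite_add_ite_eq_of_forall_mul_add_mul_eq (s := t) (A := 0) (t := t) (B := A)
    (by simpa using h)
  have htr : t = r := by
    by_contra htr
    exact hB (by simpa [htr, Ne.symm hri] using (hf r).symm)
  exact hC (by simpa [htr, hri] using (hf i).symm)

end Characters

lemma exists_monoidHom_of_forall_exists_mul {G V L : Type*} [Monoid G] [MulAction G V] [Monoid L]
    {f : V → L} (hf : Function.Surjective f) (h : ∀ l : G, ∃ c, ∀ v, f (l • v) = c * f v) :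
    ∃ ι : G →* L, ∀ l v, f (l • v) = ι l * f v := by
  choose c hc using h
  obtain ⟨v, hv⟩ := hf 1
  have hcv (l : G) : c l = f (l • v) := by rw [hc, hv, mul_one]
  exact ⟨⟨⟨c, by rw [hcv, one_smul, hv]⟩, fun l l' ↦ by
    simp only [hcv (l * l'), hcv l', mul_smul, hc l]⟩, hc⟩

section Isotopism

variable {F K L V W : Type*} [Field F] [Field K] [Field L] [AddCommGroup V] [AddCommGroup W]
  [Module K V] [Module K W] {τ : K →+* K} {P : V →ₛₗ[τ] V →ₗ[K] W}

lemma polarization_smul_add_polarization_smul (P : V →ₛₗ[τ] V →ₗ[K] W) (l : K) (u v : V) :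
    (P (l • u) v + P v (l • u)) + (P u (l • v) + P (l • v) u) =
      (l + τ l) • (P u v + P v u) := by
  simp only [map_smulₛₗ, LinearMap.smul_apply, RingHom.id_apply]
  module

variable [Algebra F L] [Module F V] [Module F W] {π : Gal(L/F)} {f : V ≃ₗ[F] L} {h : W ≃ₗ[F] L}

lemma map_polarization_eq_twistedMul (hdiag : ∀ u, h (P u u) = π (f u) * f u) (u v : V) :
    h (P u v + P v u) = twistedMul π (f u) (f v) := by
  have huv := hdiag (u + v)
  simp only [map_add, LinearMap.add_apply, hdiag] at huv
  rw [map_add, twistedMul]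
  linear_combination huv

lemma twistedMul_eq_zero_imp (hP : ∀ u v, h (P u v + P v u) = twistedMul π (f u) (f v)) {e : V}
    (he : ∀ v, P e v + P v e = 0 → v = 0) (x : L) (hx : twistedMul π (f e) x = 0) : x = 0 := by
  obtain ⟨v, rfl⟩ := f.surjective x
  rw [← hP, map_eq_zero_iff h h.injective] at hx
  rw [he v hx, map_zero]

variable [FiniteDimensional F L]

lemma exists_map_smul_eq_mul_target (hP : ∀ u v, h (P u v + P v u) = twistedMul π (f u) (f v))
    {e : V} (he : ∀ v, P e v + P v e = 0 → v = 0)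
    (hτ : Function.Surjective fun l ↦ l + τ l)
    (hf : ∀ l : K, ∃ c, ∀ v, f (l • v) = c * f v) (m : K) :
    ∃ d, ∀ w, h (m • w) = d * h w := by
  obtain ⟨l, rfl⟩ := hτ m
  obtain ⟨c, hc⟩ := hf l
  refine ⟨c + π c, fun w ↦ ?_⟩
  obtain ⟨x, hx⟩ := twistedMul_surjective (twistedMul_eq_zero_imp hP he) (h w)
  obtain ⟨v, rfl⟩ := f.surjective x
  obtain rfl : P e v + P v e = w := h.injective (by rw [hP, hx])
  rw [← polarization_smul_add_polarization_smul, map_add, hP, hP, hc, hc,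
    twistedMul_mul_add_mul_of_scalar, hP]

variable [IsGalois F L] [Algebra F K] [IsScalarTower F K V] [IsScalarTower F K W]

lemma exists_map_smul_eq_mul_source (h2 : (2 : L) ≠ 0) (hπ : Odd (orderOf π))
    (hP : ∀ u v, h (P u v + P v u) = twistedMul π (f u) (f v)) (l : K) :
    ∃ c, ∀ v, f (l • v) = c * f v := by
  obtain ⟨c, hc⟩ := eq_mul_of_twistedMul h2 hπ (g := f.conj (Algebra.lsmul F F V l))
    (h := h.conj (Algebra.lsmul F F W (l + τ l))) fun x y ↦ by
      obtain ⟨u, rfl⟩ := f.surjective x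
      obtain ⟨v, rfl⟩ := f.surjective y
      simp only [LinearEquiv.conj_apply_apply, LinearEquiv.symm_apply_apply, ← hP,
        Algebra.lsmul_coe]
      rw [← map_add, polarization_smul_add_polarization_smul]
  exact ⟨c, fun v ↦ by simpa [LinearEquiv.conj_apply_apply] using hc (f v)⟩

theorem not_forall_map_self_eq_map_mul_self (h2 : (2 : L) ≠ 0) (hτ : τ ≠ RingHom.id K)
    (hτ_surj : Function.Surjective fun l ↦ l + τ l) {e : V}
    (he : ∀ v, P e v + P v e = 0 → v = 0) {u₀ v₀ : V} (hu₀ : u₀ ≠ 0) (hv₀ : v₀ ≠ 0)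
    (huv : P u₀ v₀ = 0) : ¬ ∀ u, h (P u u) = π (f u) * f u := by
  intro hdiag
  have hP := map_polarization_eq_twistedMul hdiag
  have hπ : Odd (orderOf π) := odd_orderOf_of_twistedMul_eq_zero (twistedMul_eq_zero_imp hP he)
  have hsource := exists_map_smul_eq_mul_source h2 hπ hP
  obtain ⟨ι, hι⟩ := exists_monoidHom_of_forall_exists_mul f.surjective hsource
  obtain ⟨θ, hθ⟩ := exists_monoidHom_of_forall_exists_mul h.surjective
    (exists_map_smul_eq_mul_target hP he hτ_surj hsource)
  let θτ : K →* L := θ.comp τ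
  let πι : K →* L := (π : L →* L).comp ι
  have hchar (u v : V) (l : K) : θτ l * h (P u v) + θ l * h (P v u) =
      πι l * (π (f u) * f v) + ι l * (f u * π (f v)) := by
    have hl := hP (l • u) v
    simp only [map_smulₛₗ, LinearMap.smul_apply, RingHom.id_apply, map_add, hθ, hι,
      twistedMul, map_mul] at hl
    simp only [θτ, πι, MonoidHom.comp_apply, MonoidHom.coe_coe]
    linear_combination hl
  have hπι : πι = ι := eq_of_forall_mul_eq_mul_add_mul (t := θ) (A := h (P v₀ u₀))
    (B := π (f u₀) * f v₀) (C := f u₀ * π (f v₀)) (by simp [hu₀, hv₀]) (by simp [hu₀, hv₀])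
    (by simpa [huv] using hchar u₀ v₀)
  have hθτ : θτ = θ := eq_of_forall_add_eq_add_self (r := ι) (by
    simpa [hdiag, hπι] using hchar (f.symm 1) (f.symm 1))
  refine hτ (RingHom.ext fun l ↦ ?_)
  have hw : h.symm 1 ≠ 0 := by simp
  refine smul_left_injective K hw (h.injective ?_)
  simp only [hθ]
  exact congrArg (· * _) (DFunLike.congr_fun hθτ l)

end Isotopism

section PlanarForm

variable {K : Type*} [Field K]

/-- The form `P`, `τ`-semilinear in its first and linear in its second argument, whose diagonal
`P (w, w)` is the planar map `F w` for `w = (x, y, z)`, with `τ` in place of `x ↦ x ^ σ`. -/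
def planarForm (τ : K →+* K) (a b c : K) :
    K × K × K →ₛₗ[τ] K × K × K →ₗ[K] K × K × K :=
  LinearMap.mk₂'ₛₗ τ (RingHom.id K)
    (fun u v ↦
      (τ u.1 * v.1 + a * τ u.2.1 * v.2.2 + b * τ u.1 * v.2.1 + c * τ u.1 * v.2.2,
       a * τ u.2.1 * v.2.1 + τ u.2.2 * v.1 + b * τ u.2.2 * v.2.1 + c * τ u.1 * v.2.1,
       τ u.2.2 * v.2.2 - τ u.1 * v.2.1))
    (fun u u' v ↦ by ext <;> simp <;> ring)
    (fun l u v ↦ by ext <;> simp <;> ring)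
    (fun u v v' ↦ by ext <;> simp <;> ring)
    (fun l u v ↦ by ext <;> simp <;> ring)

variable {τ : K →+* K} {a b c : K}

lemma planarForm_apply (u v : K × K × K) :
    planarForm τ a b c u v =
      (τ u.1 * v.1 + a * τ u.2.1 * v.2.2 + b * τ u.1 * v.2.1 + c * τ u.1 * v.2.2,
       a * τ u.2.1 * v.2.1 + τ u.2.2 * v.1 + b * τ u.2.2 * v.2.1 + c * τ u.1 * v.2.1,
       τ u.2.2 * v.2.2 - τ u.1 * v.2.1) :=
  rfl

lemma planarForm_eq_zero : planarForm τ a b c (1, 0, 0) (-c, 0, 1) = 0 := by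
  simp [planarForm_apply]

lemma eq_zero_of_planarForm_polarization_eq_zero (ha : a ≠ 0)
    (hτ : Function.Injective fun y ↦ y + τ y) {v : K × K × K}
    (hv : planarForm τ a b c (0, 1, 0) v + planarForm τ a b c v (0, 1, 0) = 0) : v = 0 := by
  obtain ⟨x, y, z⟩ := v
  simp only [planarForm_apply, map_zero, map_one, Prod.mk_add_mk, Prod.mk_eq_zero] at hv
  obtain ⟨h₁, h₂, h₃⟩ := hv
  obtain rfl : x = 0 := (map_eq_zero τ).mp (by linear_combination -h₃)
  obtain rfl : z = 0 := by simpa [ha] using h₁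
  have hy : a * (y + τ y) = 0 := by
    rw [map_zero] at h₂
    linear_combination h₂
  obtain rfl : y = 0 := hτ (by simpa [ha] using hy)
  rfl

theorem not_forall_map_planarForm_self {F L : Type*} [Field F] [Field L] [Algebra F K]
    [Algebra F L] [FiniteDimensional F L] [IsGalois F L] (h2 : (2 : L) ≠ 0)
    (hτ : τ ≠ RingHom.id K) (hτ_bij : Function.Bijective fun y ↦ y + τ y) (ha : a ≠ 0)
    (L₁ : (K × K × K) ≃ₗ[F] L) (L₂ : L ≃ₗ[F] K × K × K) (π : Gal(L/F)) :
    ¬ ∀ X, L₁ (planarForm τ a b c (L₂ X) (L₂ X)) = π X * X := fun hX ↦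
  not_forall_map_self_eq_map_mul_self (f := L₂.symm) (h := L₁) h2 hτ hτ_bij.surjective
    (fun _ ↦ eq_zero_of_planarForm_polarization_eq_zero ha hτ_bij.injective)
    (by simp) (by simp) planarForm_eq_zero
    fun u ↦ by simpa using hX (L₂.symm u)

end PlanarForm

section FiniteField

lemma eq_zero_of_add_map_eq_zero {R : Type*} [Ring R] [NoZeroDivisors R] (h2 : (2 : R) ≠ 0)
    {τ : R →+* R} {n : ℕ} (hn : Odd n) (hτ : τ^[n] = id) {y : R} (hy : y + τ y = 0) : y = 0 := by
  have hiter (i : ℕ) : τ^[i] y = (-1) ^ i * y := by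
    induction i with
    | zero => simp
    | succ i ih =>
      rw [Function.iterate_succ_apply', ih, map_mul, map_pow, map_neg, map_one,
        eq_neg_of_add_eq_zero_right hy, pow_succ, mul_neg, mul_neg_one, neg_mul]
  have hny : y = -y := by simpa [hτ, hn.neg_one_pow] using hiter n
  have h2y : 2 * y = 0 := by rw [two_mul, add_eq_zero_iff_eq_neg.mpr hny]
  exact (mul_eq_zero.mp h2y).resolve_left h2

variable {K : Type*} [Field K] [Fintype K] {p m k : ℕ} [Fact p.Prime] [CharP K p]

lemma iterateFrobenius_ne_id (hK : Fintype.card K = p ^ m) (hk : ¬ m ∣ k) :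
    iterateFrobenius K p k ≠ RingHom.id K := by
  intro hid
  let _ : Algebra (ZMod p) K := ZMod.algebra K p
  have hrank : Module.finrank (ZMod p) K = m :=
    Nat.pow_right_injective (Fact.out : p.Prime).two_le <| by
      simpa [hK] using (Module.card_eq_pow_finrank (K := ZMod p) (V := K)).symm
  refine hk ?_
  rw [← hrank, ← FiniteField.orderOf_frobeniusAlgEquivOfAlgebraic]
  refine orderOf_dvd_of_pow_eq_one (AlgEquiv.ext fun x ↦ ?_)
  rw [AlgEquiv.coe_pow, FiniteField.coe_frobeniusAlgEquivOfAlgebraic_iterate, ZMod.card]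
  exact DFunLike.congr_fun hid x

lemma iterate_iterateFrobenius_eq_id (hK : Fintype.card K = p ^ m) :
    (iterateFrobenius K p k)^[m / Nat.gcd k m] = id := by
  rw [← coe_iterateFrobenius_mul]
  have hmul : k * (m / Nat.gcd k m) = m * (k / Nat.gcd k m) := by
    rw [← Nat.mul_div_assoc _ (Nat.gcd_dvd_right k m),
      ← Nat.mul_div_assoc _ (Nat.gcd_dvd_left k m), mul_comm]
  ext x
  rw [hmul, iterateFrobenius_def, pow_mul, ← hK, FiniteField.pow_card_pow, id]

lemma bijective_add_iterateFrobenius (hK : Fintype.card K = p ^ m) (h2 : (2 : K) ≠ 0)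
    (hkm : Odd (m / Nat.gcd k m)) :
    Function.Bijective fun y : K ↦ y + iterateFrobenius K p k y := by
  let f : K →+ K := .id K + (iterateFrobenius K p k : K →+ K)
  have hf : Function.Injective f := (injective_iff_map_eq_zero f).mpr fun _ ↦
    eq_zero_of_add_map_eq_zero h2 hkm (iterate_iterateFrobenius_eq_id hK)
  exact Finite.injective_iff_bijective.mp hf

end FiniteField

theorem stmt8_general {p m k : ℕ} (hp : p.Prime) (hpodd : Odd p)
    (hk : ¬ m ∣ k) (hkm : Odd (m / Nat.gcd k m))
    {K L : Type*} [Field K] [Fintype K] (hK : Fintype.card K = p ^ m)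
    [Field L] [Fintype L] (hL : Fintype.card L = p ^ (3 * m))
    {a b c : K} (ha : a ≠ 0)
    {Fm : K × K × K → K × K × K}
    (hF : Fm = fun w =>
      (w.1 ^ (p ^ k + 1) + a * w.2.1 ^ p ^ k * w.2.2 + b * w.1 ^ p ^ k * w.2.1
          + c * w.1 ^ p ^ k * w.2.2,
       a * w.2.1 ^ (p ^ k + 1) + w.2.2 ^ p ^ k * w.1 + b * w.2.2 ^ p ^ k * w.2.1
          + c * w.1 ^ p ^ k * w.2.1,
       w.2.2 ^ (p ^ k + 1) - w.1 ^ p ^ k * w.2.1)) (j : ℕ) :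
    ¬ ∃ (L₁ : (K × K × K) ≃+ L) (L₂ : L ≃+ (K × K × K)),
      ∀ X : L, L₁ (Fm (L₂ X)) = X ^ (p ^ j + 1) := by
  rintro ⟨L₁, L₂, hX⟩
  have : Fact p.Prime := ⟨hp⟩
  have : CharP K p := charP_of_card_eq_prime_pow hK
  have : CharP L p := charP_of_card_eq_prime_pow hL
  let _ : Algebra (ZMod p) K := ZMod.algebra K p
  let _ : Algebra (ZMod p) L := ZMod.algebra L p
  have hp2 : p ≠ 2 := by rintro rfl; exact absurd hpodd (by decide)
  have h2K : (2 : K) ≠ 0 := Ring.two_ne_zero (by rwa [ringChar.eq K p])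
  have h2L : (2 : L) ≠ 0 := Ring.two_ne_zero (by rwa [ringChar.eq L p])
  refine not_forall_map_planarForm_self h2L (iterateFrobenius_ne_id hK hk)
    (bijective_add_iterateFrobenius hK h2K hkm) ha (b := b) (c := c)
    (L₁.toLinearEquiv (ZMod.map_smul L₁)) (L₂.toLinearEquiv (ZMod.map_smul L₂))
    (FiniteField.frobeniusAlgEquivOfAlgebraic (ZMod p) L ^ j) fun X ↦ ?_
  have hFm (w : K × K × K) : planarForm (iterateFrobenius K p k) a b c w w = Fm w := by
    rw [hF, planarForm_apply]
    ext <;> simp only [iterateFrobenius_def] <;> ring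
  rw [AlgEquiv.coe_pow, FiniteField.coe_frobeniusAlgEquivOfAlgebraic_iterate, ZMod.card]
  simpa [hFm, pow_succ] using hX X

/-- for odd `p`, `m > 2`, `k ≢ 0 (mod m)` with `m/gcd(k,m)` odd, and
`a,b,c` such that `x^{σ²+σ+1} + c x^{σ²+σ} + b x^{σ²} + a` has no root in `F_q`,
the (planar) map `F` on `F_q^3` is not `p`-equivalent to any Dembowski–Ostrom
monomial `X^{p^j+1}` on `F_{q^3}`; in char `p`, `F_p`-linear bijections are
exactly the additive bijections. -/
theorem stmt8 {p m k : ℕ} (hp : p.Prime) (hpodd : Odd p) (hm : 2 < m)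
    (hk : ¬ m ∣ k) (hkm : Odd (m / Nat.gcd k m))
    {K L : Type*} [Field K] [Fintype K] (hK : Fintype.card K = p ^ m)
    [Field L] [Fintype L] (hL : Fintype.card L = p ^ (3 * m))
    (a b c : K)
    (hnosol : ¬ ∃ x : K, x ^ (p ^ (2 * k) + p ^ k + 1) + c * x ^ (p ^ (2 * k) + p ^ k)
        + b * x ^ (p ^ (2 * k)) + a = 0)
    (Fm : K × K × K → K × K × K)
    (hF : Fm = fun w =>
      (w.1 ^ (p ^ k + 1) + a * w.2.1 ^ p ^ k * w.2.2 + b * w.1 ^ p ^ k * w.2.1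
          + c * w.1 ^ p ^ k * w.2.2,
       a * w.2.1 ^ (p ^ k + 1) + w.2.2 ^ p ^ k * w.1 + b * w.2.2 ^ p ^ k * w.2.1
          + c * w.1 ^ p ^ k * w.2.1,
       w.2.2 ^ (p ^ k + 1) - w.1 ^ p ^ k * w.2.1)) :
    ∀ j : ℕ, j < 3 * m →
      ¬ ∃ (L₁ : (K × K × K) ≃+ L) (L₂ : L ≃+ (K × K × K)),
        ∀ X : L, L₁ (Fm (L₂ X)) = X ^ (p ^ j + 1) := fun j _ ↦
  stmt8_general hp hpodd hk hkm hK hL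
    (by rintro rfl; exact hnosol ⟨0, by simp [hp.ne_zero]⟩) hF j
end
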